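/- arXiv:2403.11470 — 2 statements merged into one kernel-verified Lean document; each statement's English description precedes it below -/
import Mathlib

section
/- Let t be a positive integer and let H⃗ be an in-arborescence on t vertices with root r. Let G⃗ be a digraph and let S ⊆ V(G⃗) be well-in-connected in G⃗ such that G⃗[S] is isomorphic to a weakly connected subdigraph of H⃗ containing r. If every vertex in V(G⃗)∖S has out-degree at least t in G⃗, then G⃗ contains H⃗⁺ as a butterfly minor such that the branch set of the apex source is a singleton. -/
section DiDefs

variable {V W : Type*}

/-- The out-degree of a vertex in a digraph given by its arc relation. -/
noncomputable def outDeg (G : W → W → Prop) (w : W) : ℕ := {x | G w x}.ncard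

/-- The in-degree of a vertex in a digraph given by its arc relation. -/
noncomputable def inDeg (G : W → W → Prop) (w : W) : ℕ := {x | G x w}.ncard

/-- The digraph `H⁺` obtained from `H` by adding an apex source (`none`) with arcs to all
other vertices. -/
def diApex (H : V → V → Prop) : Option V → Option V → Prop := fun a b =>
  (a = none ∧ ∃ v, b = some v) ∨ (∃ u v, a = some u ∧ b = some v ∧ H u v)

/-- `H` is an in-arborescence with root `r`: a directed tree all of whose arcs are oriented
towards the root. -/
def IsInArborescence [Fintype V] (H : V → V → Prop) (r : V) : Prop :=
  Irreflexive H ∧ (SimpleGraph.fromRel H).IsTree ∧ (∀ v, ¬ H r v) ∧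
    ∀ v, v ≠ r → ∃! u, H v u

/-- `G` contains a subdivision of the digraph `H`: there are branch vertices `f v` and, for
each arc `(u,v)` of `H`, a directed path in `G` from `f u` to `f v` (given by its list `P h`
of internal vertices); the paths are internally disjoint from one another and from the branch
vertices. -/
def DiSubdivisionIn (G : W → W → Prop) (H : V → V → Prop) : Prop :=
  ∃ f : V → W, Function.Injective f ∧
    ∃ P : ∀ ⦃u v : V⦄, H u v → List W,
      (∀ ⦃u v : V⦄ (h : H u v), List.Chain G (f u) (P h ++ [f v])) ∧
      (∀ ⦃u v : V⦄ (h : H u v), (f u :: (P h ++ [f v])).Nodup) ∧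
      (∀ ⦃u v : V⦄ (h : H u v), ∀ x ∈ P h, x ∉ Set.range f) ∧
      (∀ ⦃u v u' v' : V⦄ (h : H u v) (h' : H u' v'), (u, v) ≠ (u', v') →
        ∀ x ∈ P h, x ∉ P h')

/-- A state in the computation of a butterfly minor: a collection `P` of branch sets together
with an arc relation `A` between branch sets. -/
structure DState (W : Type*) where
  P : Set (Set W)
  A : Set W → Set W → Prop

/-- The initial state associated to a digraph `G`: branch sets are singletons and arcs are
those of `G`. -/
def initState (G : W → W → Prop) : DState W :=
  ⟨{B | ∃ w, B = {w}}, fun X Y => ∃ a b, G a b ∧ X = {a} ∧ Y = {b}⟩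

/-- One step of the butterfly-minor operations: deleting a vertex, deleting an arc, or
contracting an arc `(B, C)` where `B` has out-degree one or `C` has in-degree one (the two
branch sets are merged and all resulting loops and parallel arcs are removed). -/
inductive BStep : DState W → DState W → Prop
  | delVertex (σ : DState W) (B : Set W) (hB : B ∈ σ.P) :
      BStep σ ⟨σ.P \ {B}, fun X Y => σ.A X Y ∧ X ≠ B ∧ Y ≠ B⟩
  | delArc (σ : DState W) (B C : Set W) (h : σ.A B C) :
      BStep σ ⟨σ.P, fun X Y => σ.A X Y ∧ ¬(X = B ∧ Y = C)⟩
  | contract (σ : DState W) (B C : Set W) (hB : B ∈ σ.P) (hC : C ∈ σ.P) (hBC : σ.A B C)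
      (hne : B ≠ C)
      (hdeg : (∀ D, σ.A B D → D = C) ∨ (∀ D, σ.A D C → D = B)) :
      BStep σ ⟨insert (B ∪ C) (σ.P \ {B, C}),
        fun X Y =>
          (σ.A X Y ∧ X ≠ B ∧ X ≠ C ∧ Y ≠ B ∧ Y ≠ C) ∨
          (X = B ∪ C ∧ Y ≠ B ∧ Y ≠ C ∧ Y ≠ B ∪ C ∧ (σ.A B Y ∨ σ.A C Y)) ∨
          (Y = B ∪ C ∧ X ≠ B ∧ X ≠ C ∧ X ≠ B ∪ C ∧ (σ.A X B ∨ σ.A X C))⟩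

/-- `H` is a butterfly minor of `G` with branch sets `β`: some sequence of butterfly
operations starting from `G` reaches a state whose digraph is isomorphic to `H` via the
branch-set assignment `β`. -/
def IsButterflyMinorWith (G : W → W → Prop) (H : V → V → Prop) (β : V → Set W) : Prop :=
  ∃ σ : DState W, Relation.ReflTransGen BStep (initState G) σ ∧
    Function.Injective β ∧ σ.P = Set.range β ∧
    ∀ u v : V, H u v ↔ σ.A (β u) (β v)

end DiDefs

/-- A directed separation of `G`: a pair of sets covering the vertex set with no arc from
`B∖A` to `A∖B`. -/
def DiSeparation {W : Type*} (G : W → W → Prop) (A B : Set W) : Prop :=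
  A ∪ B = Set.univ ∧ ∀ b ∈ B \ A, ∀ a ∈ A \ B, ¬ G b a

/-- `S` is well-in-connected in `G`: `S ≠ V(G)` and there is no nontrivial directed
separation `(A,B)` with `S ⊆ A` of order less than `|S|`. -/
def WellInConnected {W : Type*} (G : W → W → Prop) (S : Set W) : Prop :=
  S ≠ Set.univ ∧
    ¬ ∃ A B : Set W, DiSeparation G A B ∧ (A \ B).Nonempty ∧ (B \ A).Nonempty ∧
      S ⊆ A ∧ (A ∩ B).ncard < S.ncard

/-!
Call a directed separation `(A, B)` with `B ⊄ A` tight if no separation `(C, D)` with `A ⊆ C` and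
`D ⊄ C` has smaller order; as `S` is well-in-connected, `(S, V(G))` is tight. Keep a tight
separation `(A, B)` with `S ⊆ A` and, on its left side, a model of a part `H[T]` of `H` in which
every branch set is spanned by an in-tree and meets `A ∩ B` in a single vertex, all of `A ∩ B` being
covered. By Menger's theorem the branch sets can be prolonged along disjoint paths to the separator
of any `(C, D)` as above. So, let `v ∉ T` have its out-neighbour `p` in `T`, and let `x ∈ B ∖ A`
have an arc to the separator vertex of `p`. If `(A ∪ {x}, B)` is tight, `{x}` serves as the branch
set of `v`; otherwise the model moves to a separation with larger left side and no larger order. The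
degree condition guarantees `B ⊄ A ∪ {x}`, and the process ends with `T = V(H)`.

Now take any `w ∈ B ∖ A`. Prolonging the branch sets to the separator of the separation with left
side `V(G) ∖ {w}` and right side `w` together with its out-neighbours gives an arc from `w` to each
of them. The arcs representing those of `H` leave the branch sets from the roots of the in-trees, so
the in-trees can be contracted from the root outwards, each vertex having out-degree one when it is
contracted.
-/

section

open Relation

variable {V W ι : Type*}

theorem exists_step_of_reflTransGen {r : V → V → Prop} {s : Set V} {a b : V}
    (h : ReflTransGen r a b) (ha : a ∉ s) (hb : b ∈ s) : ∃ x ∉ s, ∃ y ∈ s, r x y := by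
  induction h using ReflTransGen.head_induction_on with
  | refl => exact absurd hb ha
  | @head x y hxy _ ih =>
    by_cases hy : y ∈ s
    · exact ⟨x, ha, y, hy, hxy⟩
    · exact ih hy

/-- The subdigraph `G[U]` induced by `U`, on the same vertex type: the vertices outside `U` remain
as isolated vertices. -/
def diInduce (G : W → W → Prop) (U : Set W) : W → W → Prop := fun u v => G u v ∧ u ∈ U ∧ v ∈ U

/-- `G[P]` has a spanning in-arborescence with root `ρ`, encoded by reachability: every vertex of
`P` has a directed walk to `ρ` inside `P`. -/
structure HasInArborescence (G : W → W → Prop) (P : Set W) (ρ : W) : Prop where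
  root_mem : ρ ∈ P
  reach : ∀ z ∈ P, ReflTransGen (diInduce G P) z ρ

namespace HasInArborescence

variable {G G' : W → W → Prop} {P Q U : Set W} {ρ σ : W}

theorem singleton (G : W → W → Prop) (ρ : W) : HasInArborescence G {ρ} ρ where
  root_mem := rfl
  reach z hz := by rw [Set.mem_singleton_iff.1 hz]

theorem mono (h : HasInArborescence G P ρ) (hG : G ≤ G') : HasInArborescence G' P ρ where
  root_mem := h.root_mem
  reach z hz := ReflTransGen.mono (fun _ _ huv => ⟨hG _ _ huv.1, huv.2⟩) _ _ (h.reach z hz)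

theorem union (hP : HasInArborescence G P ρ) (hQ : HasInArborescence G Q σ)
    (h : σ ∈ P ∨ ∃ x ∈ P, G σ x) : HasInArborescence G (P ∪ Q) ρ := by
  have reachP : ∀ z ∈ P, ReflTransGen (diInduce G (P ∪ Q)) z ρ := fun z hz =>
    ReflTransGen.mono (fun _ _ huv => ⟨huv.1, .inl huv.2.1, .inl huv.2.2⟩) _ _ (hP.reach z hz)
  have reachQ : ∀ z ∈ Q, ReflTransGen (diInduce G (P ∪ Q)) z σ := fun z hz =>
    ReflTransGen.mono (fun _ _ huv => ⟨huv.1, .inr huv.2.1, .inr huv.2.2⟩) _ _ (hQ.reach z hz)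
  have reach_root : ReflTransGen (diInduce G (P ∪ Q)) σ ρ := by
    rcases h with hσ | ⟨x, hx, hσx⟩
    · exact reachP σ hσ
    · exact .head ⟨hσx, .inr hQ.root_mem, .inl hx⟩ (reachP x hx)
  exact ⟨.inl hP.root_mem, fun z hz => hz.elim (reachP z) fun hz => (reachQ z hz).trans reach_root⟩

theorem subset_of_tail_mem (h : HasInArborescence G P ρ) (hρ : ρ ∈ U) (hU : ∀ u v, G u v → u ∈ U) :
    P ⊆ U := fun z hz => by
  rcases (h.reach z hz).cases_head with rfl | ⟨y, hzy, -⟩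
  · exact hρ
  · exact hU z y hzy.1

end HasInArborescence

/-- `P z`, for `z ∈ Z`, are pairwise disjoint vertex sets, each of them the vertex set of an
in-arborescence of `G` that leads from the vertex `a z` of `X` to `z`. They play the role of
disjoint directed paths from `X` to `Z`. -/
structure IsLinkage (G : W → W → Prop) (X Z : Set W) (P : W → Set W) (a : W → W) : Prop where
  hasInArborescence : ∀ z ∈ Z, HasInArborescence G (P z) z
  source_mem : ∀ z ∈ Z, a z ∈ X
  source_mem_path : ∀ z ∈ Z, a z ∈ P z
  disjoint : Z.PairwiseDisjoint P

namespace IsLinkage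

variable {G G' : W → W → Prop} {A B X Z : Set W} {P P₁ P₂ : W → Set W} {a a₁ a₂ : W → W} {x y : W}

theorem singleton (G : W → W → Prop) (h : Z ⊆ X) : IsLinkage G X Z (fun z => {z}) id where
  hasInArborescence z _ := .singleton G z
  source_mem _ hz := h hz
  source_mem_path _ _ := rfl
  disjoint _ _ _ _ hne := Set.disjoint_singleton.2 hne

theorem mono (h : IsLinkage G X Z P a) (hG : G ≤ G') : IsLinkage G' X Z P a where
  hasInArborescence z hz := (h.hasInArborescence z hz).mono hG
  source_mem := h.source_mem
  source_mem_path := h.source_mem_path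
  disjoint := h.disjoint

theorem eq_of_mem_of_mem (h : IsLinkage G X Z P a) {z z' w : W} (hz : z ∈ Z) (hz' : z' ∈ Z)
    (hw : w ∈ P z) (hw' : w ∈ P z') : z = z' :=
  h.disjoint.elim_set hz hz' w hw hw'

theorem injOn_source (h : IsLinkage G X Z P a) : Set.InjOn a Z := fun _ hz _ hz' he =>
  h.eq_of_mem_of_mem hz hz' (h.source_mem_path _ hz) (he ▸ h.source_mem_path _ hz')

open Classical in
theorem comp (h₁ : IsLinkage G X (insert x (A ∩ B)) P₁ a₁)
    (h₂ : IsLinkage G (insert y (A ∩ B)) Z P₂ a₂) (hxy : G x y) (hx : x ∉ A)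
    (hP₁ : ∀ s ∈ insert x (A ∩ B), P₁ s ⊆ B) (hP₂ : ∀ z ∈ Z, P₂ z ⊆ A) :
    ∃ P a, IsLinkage G X Z P a := by
  let f : W → W := fun z => Function.update id y x (a₂ z)
  have f_cases : ∀ z ∈ Z, a₂ z = y ∧ f z = x ∨ a₂ z ∈ A ∩ B ∧ f z = a₂ z := by
    intro z hz
    by_cases hy : a₂ z = y
    · exact .inl ⟨hy, by simp [f, hy]⟩
    · exact .inr ⟨(h₂.source_mem z hz).resolve_left hy, by simp [f, hy]⟩
  have f_mem : ∀ z ∈ Z, f z ∈ insert x (A ∩ B) := by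
    intro z hz
    rcases f_cases z hz with ⟨-, hf⟩ | ⟨ha, hf⟩ <;> simp_all
  have injOn_f : Set.InjOn f Z := by
    intro z hz z' hz' he
    apply h₂.injOn_source hz hz'
    rcases f_cases z hz with ⟨ha, hf⟩ | ⟨ha, hf⟩ <;>
      rcases f_cases z' hz' with ⟨ha', hf'⟩ | ⟨ha', hf'⟩ <;> grind
  have meet : ∀ z ∈ Z, ∀ z' ∈ Z, ∀ w ∈ P₁ (f z), w ∈ P₂ z' → z = z' := by
    intro z hz z' hz' w hw hw'
    have hwS : w ∈ A ∩ B := ⟨hP₂ z' hz' hw', hP₁ _ (f_mem z hz) hw⟩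
    have hwf : w = f z := h₁.eq_of_mem_of_mem (.inr hwS) (f_mem z hz)
      (h₁.hasInArborescence w (.inr hwS)).root_mem hw
    have hwa : w = a₂ z := by
      rcases f_cases z hz with ⟨-, hf⟩ | ⟨-, hf⟩
      · exact absurd (hf ▸ hwf ▸ hwS.1) hx
      · exact hwf.trans hf
    exact h₂.eq_of_mem_of_mem hz hz' (hwa ▸ h₂.source_mem_path z hz) hw'
  refine ⟨fun z => P₂ z ∪ P₁ (f z), fun z => a₁ (f z), fun z hz => ?_,
    fun z hz => h₁.source_mem _ (f_mem z hz), fun z hz => .inr (h₁.source_mem_path _ (f_mem z hz)),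
    fun z hz z' hz' hne => Set.disjoint_left.2 ?_⟩
  · refine (h₂.hasInArborescence z hz).union (h₁.hasInArborescence _ (f_mem z hz)) ?_
    have ha := h₂.source_mem_path z hz
    rcases f_cases z hz with ⟨hy, hf⟩ | ⟨-, hf⟩
    · exact .inr ⟨y, hy ▸ ha, hf ▸ hxy⟩
    · exact .inl (hf ▸ ha)
  · rintro w (hw | hw) (hw' | hw')
    · exact hne (h₂.eq_of_mem_of_mem hz hz' hw hw')
    · exact hne (meet z' hz' z hz w hw' hw).symm
    · exact hne (meet z hz z' hz' w hw hw')
    · exact hne (injOn_f hz hz' (h₁.eq_of_mem_of_mem (f_mem z hz) (f_mem z' hz') hw hw'))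

end IsLinkage

theorem DiSeparation.mem_left {G : W → W → Prop} {A B : Set W} {w : W} (h : DiSeparation G A B)
    (hw : w ∉ B) : w ∈ A :=
  (h.1.ge trivial).resolve_right hw

theorem DiSeparation.mem_right {G : W → W → Prop} {A B : Set W} {w : W} (h : DiSeparation G A B)
    (hw : w ∉ A) : w ∈ B :=
  (h.1.ge trivial).resolve_left hw

/-- Every directed separation `(A, B)` of `G` with `Y ⊆ A` and `X ⊆ B`, that is, one through whose
separator `A ∩ B` all directed paths from `X` to `Y` pass, has order at least `k`. -/
def SeparationBound (G : W → W → Prop) (X Y : Set W) (k : ℕ) : Prop :=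
  ∀ A B, DiSeparation G A B → Y ⊆ A → X ⊆ B → k ≤ (A ∩ B).ncard

namespace SeparationBound

variable [Finite W] {G : W → W → Prop} {A B X Y : Set W} {k : ℕ}

theorem to_separator (h : SeparationBound G X Y k) (hAB : DiSeparation G A B) (hY : Y ⊆ A)
    (hX : X ⊆ B) : SeparationBound (fun u v => G u v ∧ u ∈ B \ A) X (A ∩ B) k := by
  intro C D hCD hC hD
  have hsep' : DiSeparation G (C ∪ A) (D ∩ B) := by
    refine ⟨by grind [DiSeparation], fun u ⟨⟨huD, huB⟩, hu⟩ v ⟨_, hv⟩ huv => ?_⟩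
    have huA : u ∈ B \ A := ⟨huB, fun hA => hu (.inr hA)⟩
    have hvB : v ∈ B := by
      by_contra hvB
      exact hAB.2 u huA v ⟨hAB.mem_left hvB, hvB⟩ huv
    have hvD : v ∉ D := fun hvD => hv ⟨hvD, hvB⟩
    exact hCD.2 u ⟨huD, fun hC => hu (.inl hC)⟩ v ⟨hCD.mem_left hvD, hvD⟩ ⟨huv, huA⟩
  exact (h _ _ hsep' (hY.trans Set.subset_union_right) (Set.subset_inter hD hX)).trans
    (Set.ncard_le_ncard (by grind))

theorem from_separator (h : SeparationBound G X Y k) (hAB : DiSeparation G A B) (hY : Y ⊆ A)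
    (hX : X ⊆ B) : SeparationBound (fun u v => G u v ∧ v ∈ A \ B) (A ∩ B) Y k := by
  intro C D hCD hC hD
  have hsep' : DiSeparation G (C ∩ A) (D ∪ B) := by
    refine ⟨by grind [DiSeparation], fun u ⟨_, hu⟩ v ⟨⟨hvC, hvA⟩, hv⟩ huv => ?_⟩
    have hvB : v ∈ A \ B := ⟨hvA, fun hB => hv (.inr hB)⟩
    have huA : u ∈ A := by
      by_contra huA
      exact hAB.2 u ⟨hAB.mem_right huA, huA⟩ v hvB huv
    have huC : u ∉ C := fun huC => hu ⟨huC, huA⟩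
    exact hCD.2 u ⟨hCD.mem_right huC, huC⟩ v ⟨hvC, fun hD => hv (.inl hD)⟩ ⟨huv, hvB⟩
  exact (h _ _ hsep' (Set.subset_inter hC hY) (hX.trans Set.subset_union_right)).trans
    (Set.ncard_le_ncard (by grind))

end SeparationBound

/-- The digraph `G` without the arc from `x` to `y`. -/
def diDeleteArc (G : W → W → Prop) (x y : W) : W → W → Prop := fun u v => G u v ∧ ¬(u = x ∧ v = y)

theorem diDeleteArc_lt {G : W → W → Prop} {x y : W} (h : G x y) : diDeleteArc G x y < G :=
  lt_of_le_not_ge (fun _ _ huv => huv.1) fun hle => (hle _ _ h).2 ⟨rfl, rfl⟩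

namespace DiSeparation

variable {G : W → W → Prop} {A B : Set W} {x y : W}

theorem mem_of_diDeleteArc (h : DiSeparation (diDeleteArc G x y) A B) (hG : ¬ DiSeparation G A B) :
    x ∈ B \ A ∧ y ∈ A \ B := by
  by_contra hxy
  exact hG ⟨h.1, fun u hu v hv huv => h.2 u hu v hv ⟨huv, fun he => hxy (he.1 ▸ he.2 ▸ ⟨hu, hv⟩)⟩⟩

theorem insert_left_of_diDeleteArc (h : DiSeparation (diDeleteArc G x y) A B) (hx : x ∈ B) :
    DiSeparation G (insert x A) B := by
  refine ⟨by grind [DiSeparation], fun u hu v hv huv => h.2 u (by grind) v (by grind) ⟨huv, ?_⟩⟩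
  grind

theorem insert_right_of_diDeleteArc (h : DiSeparation (diDeleteArc G x y) A B) (hy : y ∈ A) :
    DiSeparation G A (insert y B) := by
  refine ⟨by grind [DiSeparation], fun u hu v hv huv => h.2 u (by grind) v (by grind) ⟨huv, ?_⟩⟩
  grind

end DiSeparation

namespace SeparationBound

variable {G : W → W → Prop} {A B X Y : Set W} {x y : W} {k : ℕ}

theorem exists_linkage_of_forall_not (h : SeparationBound G X Y k) (hG : ∀ u v, ¬ G u v) :
    ∃ Z ⊆ Y, Z.ncard = k ∧ ∃ P a, IsLinkage G X Z P a := by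
  have hk : k ≤ (Y ∩ (X ∪ Yᶜ)).ncard :=
    h Y (X ∪ Yᶜ) ⟨by grind, fun u _ v _ => hG u v⟩ subset_rfl Set.subset_union_left
  obtain ⟨Z, hZ, hZk⟩ := Set.exists_subset_card_eq hk
  exact ⟨Z, by grind, hZk, _, _, .singleton G (by grind)⟩

variable [Finite W]

theorem exists_linkage_of_diDeleteArc (h : SeparationBound G X Y k) (hxy : G x y)
    (hAB : DiSeparation (diDeleteArc G x y) A B) (hY : Y ⊆ A) (hX : X ⊆ B)
    (hk : (A ∩ B).ncard < k)
    (ih : ∀ G' < G, ∀ X' Y', SeparationBound G' X' Y' k →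
      ∃ Z ⊆ Y', Z.ncard = k ∧ ∃ P a, IsLinkage G' X' Z P a) :
    ∃ Z ⊆ Y, Z.ncard = k ∧ ∃ P a, IsLinkage G X Z P a := by
  obtain ⟨hx, hy⟩ := hAB.mem_of_diDeleteArc fun hG => (h A B hG hY hX).not_gt hk
  have sepx := hAB.insert_left_of_diDeleteArc hx.1
  have sepy := hAB.insert_right_of_diDeleteArc hy.1
  obtain ⟨Z₁, hZ₁, hZ₁k, P₁, a₁, h₁⟩ := ih _
    (lt_of_le_not_ge (fun _ _ huv => huv.1) fun hle => (hle x y hxy).2.2 (.inl rfl)) _ _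
    (h.to_separator sepx (hY.trans (Set.subset_insert x A)) hX)
  obtain ⟨Z₂, hZ₂, hZ₂k, P₂, a₂, h₂⟩ := ih _
    (lt_of_le_not_ge (fun _ _ huv => huv.1) fun hle => (hle x y hxy).2.2 (.inl rfl)) _ _
    (h.from_separator sepy hY (hX.trans (Set.subset_insert y B)))
  rw [Set.insert_inter_of_mem hx.1] at hZ₁
  rw [Set.inter_insert_of_mem hy.1] at h₂
  obtain rfl : Z₁ = insert x (A ∩ B) := Set.eq_of_subset_of_ncard_le hZ₁
    (hZ₁k ▸ (Set.ncard_insert_le x _).trans hk)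
  have hP₁ : ∀ s ∈ insert x (A ∩ B), P₁ s ⊆ B := fun s hs =>
    (h₁.hasInArborescence s hs).subset_of_tail_mem (by grind) fun u v huv => huv.2.1
  have hP₂ : ∀ z ∈ Z₂, P₂ z ⊆ A := fun z hz =>
    (h₂.hasInArborescence z hz).subset_of_tail_mem (hY (hZ₂ hz)) fun u v huv => by
      by_contra hu
      exact sepy.2 u ⟨sepy.mem_right hu, hu⟩ v huv.2 huv.1
  exact ⟨Z₂, hZ₂, hZ₂k, (h₁.mono fun _ _ huv => huv.1).comp (h₂.mono fun _ _ huv => huv.1)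
    hxy hx.2 hP₁ hP₂⟩

end SeparationBound

-- Göring's proof: delete an arc `xy`; if that creates a separation of order less than `k`, then
-- `xy` is the only arc that violates it, and the two sides can be linked up separately.
theorem menger [Finite W] {G : W → W → Prop} {X Y : Set W} {k : ℕ} (h : SeparationBound G X Y k) :
    ∃ Z ⊆ Y, Z.ncard = k ∧ ∃ P a, IsLinkage G X Z P a := by
  induction G using WellFoundedLT.induction generalizing X Y with
  | ind G ih =>
    by_cases hG : ∀ u v, ¬ G u v
    · exact h.exists_linkage_of_forall_not hG
    push Not at hG
    obtain ⟨x, y, hxy⟩ := hG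
    by_cases h' : SeparationBound (diDeleteArc G x y) X Y k
    · obtain ⟨Z, hZ, hZk, P, a, hL⟩ := ih _ (diDeleteArc_lt hxy) h'
      exact ⟨Z, hZ, hZk, P, a, hL.mono (diDeleteArc_lt hxy).le⟩
    · simp only [SeparationBound, not_forall, not_le] at h'
      obtain ⟨A, B, hAB, hY, hX, hk⟩ := h'
      exact h.exists_linkage_of_diDeleteArc hxy hAB hY hX hk fun G' hG' _ _ => ih G' hG'

/-- A directed separation `(A, B)` with `B ∖ A` nonempty is tight if its order is least among all
directed separations of `G` whose left side contains `A` and whose right side is not contained in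
the left one. -/
structure IsTight (G : W → W → Prop) (A B : Set W) : Prop where
  diSeparation : DiSeparation G A B
  nonempty : (B \ A).Nonempty
  ncard_le : ∀ C D, DiSeparation G C D → A ⊆ C → (D \ C).Nonempty → (A ∩ B).ncard ≤ (C ∩ D).ncard

theorem WellInConnected.isTight [Finite W] {G : W → W → Prop} {S : Set W}
    (h : WellInConnected G S) : IsTight G S Set.univ where
  diSeparation := ⟨Set.union_univ S, fun _ _ _ hv => absurd trivial hv.2⟩
  nonempty := Set.sdiff_nonempty.2 fun hS => h.1 (Set.univ_subset_iff.1 hS)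
  ncard_le C D hCD hSC hDC := by
    rw [Set.inter_univ]
    by_cases hC : (C \ D).Nonempty
    · exact not_lt.1 fun hlt => h.2 ⟨C, D, hCD, hC, hDC, hSC, hlt⟩
    · have hCD : C ⊆ D := Set.sdiff_eq_empty.1 (Set.not_nonempty_iff_eq_empty.1 hC)
      exact Set.ncard_le_ncard (Set.subset_inter hSC (hSC.trans hCD))

namespace IsTight

variable {G : W → W → Prop} {A B C D : Set W} {x s : W}

theorem of_ncard_le (h : IsTight G A B) (hCD : DiSeparation G C D) (hAC : A ⊆ C)
    (hDC : (D \ C).Nonempty) (hle : (C ∩ D).ncard ≤ (A ∩ B).ncard) : IsTight G C D where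
  diSeparation := hCD
  nonempty := hDC
  ncard_le E F hEF hCE hFE := hle.trans (h.ncard_le E F hEF (hAC.trans hCE) hFE)

theorem insert_or_exists_diSeparation (h : IsTight G A B) (hx : x ∈ B)
    (hne : (B \ insert x A).Nonempty) :
    IsTight G (insert x A) B ∨ ∃ C D, DiSeparation G C D ∧ insert x A ⊆ C ∧ (D \ C).Nonempty ∧
      (C ∩ D).ncard ≤ (A ∩ B).ncard := by
  have hsep : DiSeparation G (insert x A) B :=
    ⟨by grind [h.diSeparation.1], fun u hu v hv => h.diSeparation.2 u (by grind) v (by grind)⟩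
  by_contra! hcon
  refine hcon.1 ⟨hsep, hne, fun C D hCD hC hDC => ?_⟩
  rw [Set.insert_inter_of_mem hx]
  exact (Set.ncard_insert_le x _).trans (hcon.2 C D hCD hC hDC)

variable [Finite W]

theorem exists_arc (h : IsTight G A B) (hs : s ∈ A ∩ B) : ∃ x ∈ B \ A, G x s := by
  by_contra! hG
  have hsep : DiSeparation G A (B \ {s}) := by
    refine ⟨by grind [DiSeparation, h.diSeparation.1], fun u hu v hv huv => ?_⟩
    by_cases hvs : v = s
    · exact hG u ⟨hu.1.1, hu.2⟩ (hvs ▸ huv)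
    · exact h.diSeparation.2 u ⟨hu.1.1, hu.2⟩ v ⟨hv.1, fun hB => hv.2 ⟨hB, hvs⟩⟩ huv
  have hle := h.ncard_le A (B \ {s}) hsep subset_rfl
    (h.nonempty.mono fun w hw => ⟨⟨hw.1, fun hws => hw.2 (hws ▸ hs.1)⟩, hw.2⟩)
  rw [← Set.inter_sdiff_assoc] at hle
  exact hle.not_gt (Set.ncard_sdiff_singleton_lt_of_mem hs)

theorem separationBound (h : IsTight G A B) (hCD : DiSeparation G C D) (hAC : A ⊆ C)
    (hDC : (D \ C).Nonempty) :
    SeparationBound (diInduce G (B ∩ C)) (C ∩ D) (A ∩ B) (A ∩ B).ncard := by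
  intro E F hEF hE hF
  have hsep : DiSeparation G (A ∪ E ∩ C) ((D ∪ F) ∩ B) := by
    refine ⟨by grind [h.diSeparation.1, hCD.1, hEF.1], fun u hu v hv huv => ?_⟩
    have hvB : v ∈ B := by
      by_contra hvB
      exact h.diSeparation.2 u (by grind) v ⟨h.diSeparation.mem_left hvB, hvB⟩ huv
    have hv' : v ∈ (C \ D) ∩ (E \ F) := by grind [hCD.1, hEF.1]
    by_cases huC : u ∈ C
    · exact hEF.2 u (by grind) v hv'.2 ⟨huv, by grind, by grind⟩
    · exact hCD.2 u ⟨hCD.mem_right huC, huC⟩ v hv'.1 huv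
  have hne : (((D ∪ F) ∩ B) \ (A ∪ E ∩ C)).Nonempty :=
    hDC.mono fun w hw => by grind [h.diSeparation.mem_right fun hA => hw.2 (hAC hA)]
  exact (h.ncard_le _ _ hsep Set.subset_union_left hne).trans (Set.ncard_le_ncard (by grind))

theorem exists_linkage (h : IsTight G A B) (hCD : DiSeparation G C D) (hAC : A ⊆ C)
    (hDC : (D \ C).Nonempty) :
    ∃ P a, IsLinkage G (C ∩ D) (A ∩ B) P a ∧ ∀ z ∈ A ∩ B, P z ⊆ B ∩ C := by
  obtain ⟨Z, hZ, hZk, P, a, hL⟩ := menger (h.separationBound hCD hAC hDC)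
  obtain rfl : Z = A ∩ B := Set.eq_of_subset_of_ncard_le hZ hZk.ge
  exact ⟨P, a, hL.mono fun _ _ huv => huv.1, fun z hz =>
    (hL.hasInArborescence z hz).subset_of_tail_mem ⟨hz.2, hAC hz.1⟩ fun u v huv => huv.2.1⟩

end IsTight

/-- A model in `G` of the subdigraph of `H` induced by `T`: the branch sets `β v` are pairwise
disjoint, `G[β v]` has a spanning in-arborescence with root `ρ v`, and each arc from `u` to `v` is
represented by an arc of `G` from the root `ρ u` to some vertex of `β v`. Contracting the
in-arborescences turns it into a butterfly model. -/
structure IsRootedModel (G : W → W → Prop) (H : V → V → Prop) (T : Set V) (β : V → Set W)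
    (ρ : V → W) : Prop where
  hasInArborescence : ∀ v ∈ T, HasInArborescence G (β v) (ρ v)
  disjoint : T.PairwiseDisjoint β
  exists_arc : ∀ u ∈ T, ∀ v ∈ T, H u v → ∃ z ∈ β v, G (ρ u) z

theorem IsRootedModel.addApex {G : W → W → Prop} {H : V → V → Prop} {β : V → Set W} {ρ : V → W}
    {w : W} (h : IsRootedModel G H Set.univ β ρ) (hw : ∀ v, w ∉ β v) (hG : ∀ v, ∃ z ∈ β v, G w z) :
    IsRootedModel G (diApex H) Set.univ (fun o => o.elim {w} β) (fun o => o.elim w ρ) where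
  hasInArborescence
    | none, _ => .singleton G w
    | some v, _ => h.hasInArborescence v trivial
  disjoint
    | none, _, none, _, hne => absurd rfl hne
    | none, _, some v, _, _ => Set.disjoint_singleton_left.2 (hw v)
    | some v, _, none, _, _ => Set.disjoint_singleton_right.2 (hw v)
    | some u, _, some v, _, hne => h.disjoint trivial trivial fun huv => hne (congrArg some huv)
  exists_arc := by
    rintro u - v - (⟨rfl, v, rfl⟩ | ⟨u, v, rfl, rfl, huv⟩)
    · exact hG v
    · exact h.exists_arc u trivial v trivial huv

/-- A rooted model of `H[T]` on the left side of a tight separation `(A, B)`, where `T` is closed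
under out-neighbours and every branch set meets the separator `A ∩ B` in exactly one vertex `τ v`,
through which it can be extended into `B`. -/
structure IsTightModel (G : W → W → Prop) (H : V → V → Prop) (T : Set V) (A B : Set W)
    (β : V → Set W) (ρ τ : V → W) : Prop extends IsRootedModel G H T β ρ where
  isTight : IsTight G A B
  closed : ∀ u ∈ T, ∀ v, H u v → v ∈ T
  subset : ∀ v ∈ T, β v ⊆ A
  mem : ∀ v ∈ T, τ v ∈ β v
  image_eq : τ '' T = A ∩ B

namespace IsTightModel

variable {G : W → W → Prop} {H : V → V → Prop} {T : Set V} {A B C D : Set W} {β : V → Set W}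
  {ρ τ : V → W} {p v : V} {w x : W}

theorem mem_inter (h : IsTightModel G H T A B β ρ τ) (hv : v ∈ T) : τ v ∈ A ∩ B :=
  h.image_eq ▸ Set.mem_image_of_mem τ hv

theorem injOn (h : IsTightModel G H T A B β ρ τ) : Set.InjOn τ T := fun u hu v hv he =>
  h.disjoint.elim_set hu hv (τ u) (h.mem u hu) (he ▸ h.mem v hv)

theorem ncard_inter (h : IsTightModel G H T A B β ρ τ) : (A ∩ B).ncard = T.ncard := by
  rw [← h.image_eq, h.injOn.ncard_image]

theorem eq_of_mem_of_mem (h : IsTightModel G H T A B β ρ τ) (hv : v ∈ T) (hw : w ∈ β v)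
    (hB : w ∈ B) : w = τ v := by
  obtain ⟨u, hu, rfl⟩ : w ∈ τ '' T := h.image_eq ▸ ⟨h.subset v hv hw, hB⟩
  rw [h.disjoint.elim_set hu hv (τ u) (h.mem u hu) hw]

theorem exists_reroute [Finite W] (h : IsTightModel G H T A B β ρ τ) (hCD : DiSeparation G C D)
    (hAC : A ⊆ C) (hDC : (D \ C).Nonempty) :
    ∃ (β' : V → Set W) (τ' : V → W), IsRootedModel G H T β' ρ ∧
      ∀ v ∈ T, β' v ⊆ C ∧ τ' v ∈ β' v ∧ τ' v ∈ C ∩ D := by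
  obtain ⟨P, a, hL, hP⟩ := h.isTight.exists_linkage hCD hAC hDC
  have eq_of_mem : ∀ u ∈ T, ∀ v ∈ T, ∀ w ∈ P (τ u), w ∈ β v → u = v := by
    intro u hu v hv w hw hwv
    obtain rfl := h.eq_of_mem_of_mem hv hwv (hP _ (h.mem_inter hu) hw).1
    exact h.injOn hu hv (hL.eq_of_mem_of_mem (h.mem_inter hu) (h.mem_inter hv) hw
      (hL.hasInArborescence _ (h.mem_inter hv)).root_mem)
  refine ⟨fun v => β v ∪ P (τ v), a ∘ τ, ⟨fun v hv => ?_, fun u hu v hv hne => ?_, ?_⟩,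
    fun v hv => ⟨?_, .inr (hL.source_mem_path _ (h.mem_inter hv)),
      hL.source_mem _ (h.mem_inter hv)⟩⟩
  · exact (h.hasInArborescence v hv).union (hL.hasInArborescence _ (h.mem_inter hv))
      (.inl (h.mem v hv))
  · rw [Function.onFun, Set.disjoint_left]
    rintro w (hw | hw) (hw' | hw')
    · exact hne (h.disjoint.elim_set hu hv w hw hw')
    · exact hne (eq_of_mem v hv u hu w hw' hw).symm
    · exact hne (eq_of_mem u hu v hv w hw hw')
    · exact hne (h.injOn hu hv
        (hL.eq_of_mem_of_mem (h.mem_inter hu) (h.mem_inter hv) hw hw'))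
  · intro u hu v hv huv
    obtain ⟨z, hz, hG⟩ := h.exists_arc u hu v hv huv
    exact ⟨z, .inl hz, hG⟩
  · exact Set.union_subset ((h.subset v hv).trans hAC) fun w hw => (hP _ (h.mem_inter hv) hw).2

theorem exists_advance [Finite W] (h : IsTightModel G H T A B β ρ τ) (hCD : DiSeparation G C D)
    (hAC : A ⊆ C) (hDC : (D \ C).Nonempty) (hle : (C ∩ D).ncard ≤ (A ∩ B).ncard) :
    ∃ β' τ', IsTightModel G H T C D β' ρ τ' := by
  obtain ⟨β', τ', hM, hβ'⟩ := h.exists_reroute hCD hAC hDC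
  have injOn : Set.InjOn τ' T := fun u hu v hv he =>
    hM.disjoint.elim_set hu hv (τ' u) (hβ' u hu).2.1 (he ▸ (hβ' v hv).2.1)
  refine ⟨β', τ', hM, h.isTight.of_ncard_le hCD hAC hDC hle, h.closed, fun v hv => (hβ' v hv).1,
    fun v hv => (hβ' v hv).2.1, Set.eq_of_subset_of_ncard_le ?_ ?_⟩
  · exact Set.image_subset_iff.2 fun v hv => (hβ' v hv).2.2
  · rwa [injOn.ncard_image, ← h.ncard_inter]

open Classical in
theorem insert_vertex (h : IsTightModel G H T A B β ρ τ) (hirr : ∀ v, ¬ H v v)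
    (huniq : Relator.RightUnique H) (hx : x ∈ B \ A) (htight : IsTight G (insert x A) B)
    (hv : v ∉ T) (hp : p ∈ T) (hvp : H v p) (hxp : G x (τ p)) :
    IsTightModel G H (insert v T) (insert x A) B (Function.update β v {x})
      (Function.update ρ v x) (Function.update τ v x) := by
  have ne : ∀ u ∈ T, u ≠ v := fun u hu he => hv (he ▸ hu)
  have notMem : ∀ u ∈ T, x ∉ β u := fun u hu hxu => hx.2 (h.subset u hu hxu)
  refine ⟨⟨?_, ?_, ?_⟩, htight, ?_, ?_, ?_, ?_⟩
  · rintro u (rfl | hu)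
    · simpa using HasInArborescence.singleton G x
    · simpa [ne u hu] using h.hasInArborescence u hu
  · refine (Set.pairwiseDisjoint_insert_of_notMem hv).2 ⟨fun u hu u' hu' hne => ?_, fun u hu => ?_⟩
    · simpa [Function.onFun, ne u hu, ne u' hu'] using h.disjoint hu hu' hne
    · simpa [ne u hu] using notMem u hu
  · rintro u (rfl | hu) u' (rfl | hu') huu'
    · exact absurd huu' (hirr _)
    · obtain rfl := huniq huu' hvp
      exact ⟨τ u', by simpa [ne u' hp] using h.mem u' hp, by simpa using hxp⟩
    · exact absurd (h.closed u hu u' huu') hv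
    · simpa [ne u hu, ne u' hu'] using h.exists_arc u hu u' hu' huu'
  · rintro u (rfl | hu) u' huu'
    · exact .inr (huniq huu' hvp ▸ hp)
    · exact .inr (h.closed u hu u' huu')
  · rintro u (rfl | hu)
    · simp
    · simpa [ne u hu] using (h.subset u hu).trans (Set.subset_insert x A)
  · rintro u (rfl | hu)
    · simp
    · simpa [ne u hu] using h.mem u hu
  · rw [Set.image_insert_eq, Function.update_self, Set.insert_inter_of_mem hx.1, ← h.image_eq]
    exact congrArg _ (Set.image_congr fun u hu => Function.update_of_ne (ne u hu) _ _)

variable [Finite W]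

theorem sdiff_insert_nonempty (h : IsTightModel G H T A B β ρ τ) (hx : x ∈ B \ A) (hloop : ¬ G x x)
    (hdeg : T.ncard < outDeg G x) : (B \ insert x A).Nonempty := by
  rw [← h.ncard_inter] at hdeg
  obtain ⟨u, hu, huAB⟩ := Set.exists_mem_notMem_of_ncard_lt_ncard hdeg
  have huB : u ∈ B := by
    by_contra huB
    exact h.isTight.diSeparation.2 x hx u ⟨h.isTight.diSeparation.mem_left huB, huB⟩ hu
  refine ⟨u, huB, ?_⟩
  rintro (rfl | huA)
  · exact hloop hu
  · exact huAB ⟨huA, huB⟩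

theorem exists_ssuperset [Finite V] (h : IsTightModel G H T A B β ρ τ) (hirr : ∀ v, ¬ H v v)
    (huniq : Relator.RightUnique H) (hreach : ∀ v, ∃ u ∈ T, ReflTransGen H v u)
    (hT : T ≠ Set.univ) (hloop : ∀ w ∉ A, ¬ G w w) (hdeg : ∀ w ∉ A, Nat.card V ≤ outDeg G w) :
    ∃ T' A' B' β' ρ' τ', T ⊆ T' ∧ A ⊂ A' ∧ IsTightModel G H T' A' B' β' ρ' τ' := by
  obtain ⟨v₀, hv₀⟩ := (Set.ne_univ_iff_exists_notMem T).1 hT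
  obtain ⟨u, hu, hv₀u⟩ := hreach v₀
  obtain ⟨v, hv, p, hp, hvp⟩ := exists_step_of_reflTransGen hv₀u hv₀ hu
  obtain ⟨x, hx, hxp⟩ := h.isTight.exists_arc (h.mem_inter hp)
  have hne : (B \ insert x A).Nonempty :=
    h.sdiff_insert_nonempty hx (hloop x hx.2) ((Set.ncard_lt_card hT).trans_le (hdeg x hx.2))
  rcases h.isTight.insert_or_exists_diSeparation hx.1 hne with htight | ⟨C, D, hCD, hAC, hDC, hle⟩
  · exact ⟨_, _, _, _, _, _, Set.subset_insert v T, Set.ssubset_insert hx.2,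
      h.insert_vertex hirr huniq hx htight hv hp hvp hxp⟩
  · have hssub : A ⊂ C := (Set.ssubset_insert hx.2).trans_subset hAC
    obtain ⟨β', τ', h'⟩ := h.exists_advance hCD hssub.subset hDC hle
    exact ⟨T, C, D, β', ρ, τ', subset_rfl, hssub, h'⟩

theorem exists_univ [Finite V] (h : IsTightModel G H T A B β ρ τ) (hirr : ∀ v, ¬ H v v)
    (huniq : Relator.RightUnique H) (hreach : ∀ v, ∃ u ∈ T, ReflTransGen H v u)
    (hloop : ∀ w ∉ A, ¬ G w w) (hdeg : ∀ w ∉ A, Nat.card V ≤ outDeg G w) :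
    ∃ A' B' β' ρ' τ', A ⊆ A' ∧ IsTightModel G H Set.univ A' B' β' ρ' τ' := by
  induction A using WellFoundedGT.induction generalizing T B β ρ τ with
  | ind A ih =>
    by_cases hT : T = Set.univ
    · exact ⟨A, B, β, ρ, τ, subset_rfl, hT ▸ h⟩
    obtain ⟨T', A', B', β', ρ', τ', hTT', hAA', h'⟩ :=
      h.exists_ssuperset hirr huniq hreach hT hloop hdeg
    have hreach' : ∀ v, ∃ u ∈ T', ReflTransGen H v u := fun v =>
      (hreach v).imp fun u hu => hu.imp_left (@hTT' u)
    obtain ⟨A'', B'', β'', ρ'', τ'', hA'', h''⟩ := ih A' hAA' h' hreach'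
      (fun w hw => hloop w fun hA => hw (hAA'.subset hA))
      (fun w hw => hdeg w fun hA => hw (hAA'.subset hA))
    exact ⟨A'', B'', β'', ρ'', τ'', hAA'.subset.trans hA'', h''⟩

theorem exists_addApex (h : IsTightModel G H Set.univ A B β ρ τ) (hw : w ∈ B \ A) :
    ∃ β' ρ', IsRootedModel G (diApex H) Set.univ β' ρ' ∧ β' none = {w} := by
  have hsep : DiSeparation G {w}ᶜ (insert w {x | G w x}) :=
    ⟨by grind, fun u hu v hv huv => by grind⟩
  obtain ⟨β', τ', hM, hβ'⟩ := h.exists_reroute hsep (Set.subset_compl_singleton_iff.2 hw.2)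
    ⟨w, .inl rfl, fun hw => hw rfl⟩
  have harc : ∀ v, ∃ z ∈ β' v, G w z := fun v =>
    let ⟨_, hmem, hne, hor⟩ := hβ' v trivial
    ⟨τ' v, hmem, hor.resolve_left hne⟩
  exact ⟨_, _, hM.addApex (fun v hwv => (hβ' v trivial).1 hwv rfl) harc, rfl⟩

end IsTightModel

theorem reflTransGen_bStep_of_arcs_le [Finite W] (P : Set (Set W)) {A A' : Set W → Set W → Prop}
    (h : A' ≤ A) : ReflTransGen BStep ⟨P, A⟩ ⟨P, A'⟩ := by
  induction A using WellFoundedLT.induction with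
  | ind A ih =>
    by_cases hle : A ≤ A'
    · rw [hle.antisymm h]
    simp only [Pi.le_def, le_Prop_eq, not_forall] at hle
    obtain ⟨X, Y, hA, hA'⟩ := hle
    refine .head (.delArc ⟨P, A⟩ X Y hA) (ih _ (lt_of_le_not_ge (fun _ _ h => h.1) fun hle => ?_)
      fun X' Y' h' => ⟨h X' Y' h', ?_⟩)
    · exact (hle X Y hA).2 ⟨rfl, rfl⟩
    · rintro ⟨rfl, rfl⟩
      exact hA' h'

theorem reflTransGen_bStep_of_subset [Finite W] {P P' : Set (Set W)} {A A' : Set W → Set W → Prop}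
    (hP : P' ⊆ P) (hA : A' ≤ A) (hA' : ∀ X Y, A' X Y → X ∈ P' ∧ Y ∈ P') :
    ReflTransGen BStep ⟨P, A⟩ ⟨P', A'⟩ := by
  induction P using WellFoundedLT.induction generalizing A with
  | ind P ih =>
    by_cases hle : P ⊆ P'
    · rw [hle.antisymm hP]
      exact reflTransGen_bStep_of_arcs_le P' hA
    obtain ⟨B, hB, hB'⟩ := Set.not_subset.1 hle
    refine .head (.delVertex ⟨P, A⟩ B hB) (ih _ (Set.sdiff_singleton_ssubset.2 hB)
      (Set.subset_sdiff_singleton hP hB') fun X Y h => ⟨hA X Y h, ?_, ?_⟩)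
    · rintro rfl
      exact hB' (hA' _ _ h).1
    · rintro rfl
      exact hB' (hA' _ _ h).2

/-- The colour class of `a` in the set `K` coloured by `c`. -/
def colorClass (K : Set W) (c : W → ι) (a : W) : Set W := {z ∈ K | c z = c a}

/-- The simple quotient of the digraph `F` on the vertex set `K` obtained by identifying vertices
of the same colour: the state in which each colour class has been contracted to one vertex. -/
def colorState (K : Set W) (F : W → W → Prop) (c : W → ι) : DState W where
  P := colorClass K c '' K
  A X Y := X ≠ Y ∧ ∃ a ∈ K, ∃ b ∈ K, F a b ∧ colorClass K c a = X ∧ colorClass K c b = Y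

open Classical in
/-- The colouring obtained from `c` by merging the colour of `x` into that of `y`, which is the
effect of contracting an arc from `x` to `y`. -/
noncomputable def recolor (c : W → ι) (x y : W) : W → ι := fun z => if c z = c x then c y else c z

section ColorState

variable {K : Set W} {F F' : W → W → Prop} {c : W → ι} {a b x y : W} {B C : Set W}

theorem mem_colorClass_self (ha : a ∈ K) : a ∈ colorClass K c a := ⟨ha, rfl⟩

theorem colorClass_eq_iff (ha : a ∈ K) : colorClass K c a = colorClass K c b ↔ c a = c b :=
  ⟨fun h => (h ▸ mem_colorClass_self ha : a ∈ colorClass K c b).2, fun h => by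
    rw [colorClass, h, colorClass]⟩

theorem colorClass_recolor_of_eq (hB : colorClass K c x = B) (hC : colorClass K c y = C)
    (ha : a ∈ K) (h : colorClass K c a = B ∨ colorClass K c a = C) :
    colorClass K (recolor c x y) a = B ∪ C := by
  subst hB hC
  simp only [colorClass_eq_iff ha] at h
  ext z
  simp only [colorClass, recolor, Set.mem_union, Set.mem_ofPred_eq]
  grind

theorem colorClass_recolor_of_ne (hB : colorClass K c x = B) (hC : colorClass K c y = C)
    (ha : a ∈ K) (h : ¬(colorClass K c a = B ∨ colorClass K c a = C)) :
    colorClass K (recolor c x y) a = colorClass K c a := by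
  subst hB hC
  simp only [colorClass_eq_iff ha] at h
  ext z
  simp only [colorClass, recolor, Set.mem_ofPred_eq]
  grind

theorem colorState_recolor_P (hx : x ∈ K) (hB : colorClass K c x = B) (hC : colorClass K c y = C) :
    (colorState K F (recolor c x y)).P = insert (B ∪ C) ((colorState K F c).P \ {B, C}) := by
  ext Z
  constructor
  · rintro ⟨a, ha, rfl⟩
    by_cases h : colorClass K c a = B ∨ colorClass K c a = C
    · exact .inl (colorClass_recolor_of_eq hB hC ha h)
    · exact .inr (colorClass_recolor_of_ne hB hC ha h ▸ ⟨⟨a, ha, rfl⟩, h⟩)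
  · rintro (rfl | ⟨⟨a, ha, rfl⟩, h⟩)
    · exact ⟨x, hx, colorClass_recolor_of_eq hB hC hx (.inl hB)⟩
    · exact ⟨a, ha, colorClass_recolor_of_ne hB hC ha h⟩

theorem colorState_recolor_A {X Y : Set W} (hB : colorClass K c x = B) (hC : colorClass K c y = C) :
    (colorState K F (recolor c x y)).A X Y ↔
      ((colorState K F c).A X Y ∧ X ≠ B ∧ X ≠ C ∧ Y ≠ B ∧ Y ≠ C) ∨
      (X = B ∪ C ∧ Y ≠ B ∧ Y ≠ C ∧ Y ≠ B ∪ C ∧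
        ((colorState K F c).A B Y ∨ (colorState K F c).A C Y)) ∨
      (Y = B ∪ C ∧ X ≠ B ∧ X ≠ C ∧ X ≠ B ∪ C ∧
        ((colorState K F c).A X B ∨ (colorState K F c).A X C)) := by
  have of_eq := fun a => colorClass_recolor_of_eq hB hC (a := a)
  have of_ne := fun a => colorClass_recolor_of_ne hB hC (a := a)
  constructor
  · rintro ⟨hne, a, ha, b, hb, hab, rfl, rfl⟩
    by_cases hMa : colorClass K c a = B ∨ colorClass K c a = C <;>
      by_cases hMb : colorClass K c b = B ∨ colorClass K c b = C
    · exact absurd ((of_eq a ha hMa).trans (of_eq b hb hMb).symm) hne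
    · rw [of_eq a ha hMa, of_ne b hb hMb] at hne ⊢
      obtain ⟨hbB, hbC⟩ := not_or.1 hMb
      exact .inr (.inl ⟨rfl, hbB, hbC, hne.symm,
        hMa.imp (fun h => ⟨Ne.symm hbB, a, ha, b, hb, hab, h, rfl⟩)
          (fun h => ⟨Ne.symm hbC, a, ha, b, hb, hab, h, rfl⟩)⟩)
    · rw [of_ne a ha hMa, of_eq b hb hMb] at hne ⊢
      obtain ⟨haB, haC⟩ := not_or.1 hMa
      exact .inr (.inr ⟨rfl, haB, haC, hne,
        hMb.imp (fun h => ⟨haB, a, ha, b, hb, hab, rfl, h⟩)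
          (fun h => ⟨haC, a, ha, b, hb, hab, rfl, h⟩)⟩)
    · rw [of_ne a ha hMa, of_ne b hb hMb] at hne ⊢
      rw [not_or] at hMa hMb
      exact .inl ⟨⟨hne, a, ha, b, hb, hab, rfl, rfl⟩, hMa.1, hMa.2, hMb.1, hMb.2⟩
  · simp only [colorState]
    rintro (⟨⟨hne, a, ha, b, hb, hab, rfl, rfl⟩, h⟩ |
      ⟨rfl, hYB, hYC, hYU, ⟨-, a, ha, b, hb, hab, h, rfl⟩ | ⟨-, a, ha, b, hb, hab, h, rfl⟩⟩ |
      ⟨rfl, hXB, hXC, hXU, ⟨-, a, ha, b, hb, hab, rfl, h⟩ | ⟨-, a, ha, b, hb, hab, rfl, h⟩⟩) <;>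
    grind

theorem reflTransGen_bStep_colorState_of_le [Finite W] (h : F' ≤ F) :
    ReflTransGen BStep (colorState K F c) (colorState K F' c) :=
  reflTransGen_bStep_of_arcs_le _ fun _ _ ⟨hne, a, ha, b, hb, hF, hX, hY⟩ =>
    ⟨hne, a, ha, b, hb, h a b hF, hX, hY⟩

theorem reflTransGen_bStep_initState [Finite W] (G : W → W → Prop) (K : Set W) :
    ReflTransGen BStep (initState G) (colorState K G id) := by
  have colorClass_id : ∀ a ∈ K, colorClass K id a = {a} := fun a ha => by
    ext z
    simp only [colorClass, id_eq, Set.mem_ofPred_eq, Set.mem_singleton_iff]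
    grind
  refine reflTransGen_bStep_of_subset ?_ ?_ ?_
  · rintro _ ⟨a, ha, rfl⟩
    exact ⟨a, colorClass_id a ha⟩
  · rintro _ _ ⟨-, a, ha, b, hb, hG, rfl, rfl⟩
    exact ⟨a, b, hG, colorClass_id a ha, colorClass_id b hb⟩
  · rintro _ _ ⟨-, a, ha, b, hb, -, rfl, rfl⟩
    exact ⟨⟨a, ha, rfl⟩, ⟨b, hb, rfl⟩⟩

theorem bStep_colorState_recolor (hx : x ∈ K) (hy : y ∈ K) (hF : F x y) (hne : c x ≠ c y)
    (hdeg : ∀ a b, F a b → c a = c x → c b = c x ∨ c b = c y) :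
    BStep (colorState K F c) (colorState K F (recolor c x y)) := by
  have hBC : colorClass K c x ≠ colorClass K c y := mt (colorClass_eq_iff hx).1 hne
  have harc : (colorState K F c).A (colorClass K c x) (colorClass K c y) :=
    ⟨hBC, x, hx, y, hy, hF, rfl, rfl⟩
  have honly : ∀ Z, (colorState K F c).A (colorClass K c x) Z → Z = colorClass K c y := by
    rintro _ ⟨hZ, a, ha, b, hb, hab, hax, rfl⟩
    rcases hdeg a b hab ((colorClass_eq_iff ha).1 hax) with hbx | hby
    · exact absurd ((colorClass_eq_iff hb).2 hbx).symm hZ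
    · exact (colorClass_eq_iff hb).2 hby
  convert BStep.contract (colorState K F c) _ _ ⟨x, hx, rfl⟩ ⟨y, hy, rfl⟩ harc hBC (.inl honly)
    using 1
  exact congrArg₂ DState.mk (colorState_recolor_P hx rfl rfl)
    (funext₂ fun _ _ => propext (colorState_recolor_A rfl rfl))

end ColorState

/-- Keeps from `G` the arcs whose tail lies outside `D` or is fixed by `q`: once `x ∈ D` has been
contracted into `q x`, only the arcs leaving the root itself are still available. -/
def prune (G : W → W → Prop) (q : W → W) (D : Set W) : W → W → Prop :=
  fun a b => G a b ∧ (a ∈ D → q a = a)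

open Classical in
/-- Agrees with `q` on `D` and with the identity elsewhere: the colouring in which exactly the
vertices of `D` have been contracted into their roots `q x`. -/
noncomputable def contractOn (q : W → W) (D : Set W) : W → W :=
  fun z => if z ∈ D then q z else z

section Contract

variable {G : W → W → Prop} {K D : Set W} {q : W → W} {x y z : W}

theorem contractOn_of_mem (hz : z ∈ D) : contractOn q D z = q z := if_pos hz

theorem contractOn_of_notMem (hz : z ∉ D) : contractOn q D z = z := if_neg hz

theorem recolor_contractOn (hqD : ∀ z ∈ D, q z ∈ D) (hx : x ∉ D) (hy : y ∈ D) (hxy : q x = q y) :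
    recolor (contractOn q D) x y = contractOn q (insert x D) := by
  funext z
  simp only [recolor, contractOn, Set.mem_insert_iff]
  grind

theorem reflTransGen_bStep_insert [Finite W] (hqK : ∀ z ∈ K, q z ∈ D) (hDK : D ⊆ K) (hx : x ∈ K)
    (hxD : x ∉ D) (hy : y ∈ D) (hG : G x y) (hxy : q x = q y) :
    ReflTransGen BStep (colorState K (prune G q D) (contractOn q D))
      (colorState K (prune G q (insert x D)) (contractOn q (insert x D))) := by
  have hqD : ∀ z ∈ D, q z ∈ D := fun z hz => hqK z (hDK hz)
  let F : W → W → Prop := fun a b => prune G q D a b ∧ (a = x → b = y)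
  have hFx : F x y := ⟨⟨hG, fun h => absurd h hxD⟩, fun _ => rfl⟩
  have color_x : contractOn q D x = x := contractOn_of_notMem hxD
  have color_of_mem : ∀ z ∈ D, contractOn q D z ∈ D := fun z hz => by
    rw [contractOn_of_mem hz]
    exact hqD z hz
  have eq_of_color : ∀ a, contractOn q D a = contractOn q D x → a = x := fun a ha => by
    rw [color_x] at ha
    by_cases haD : a ∈ D
    · exact absurd (ha ▸ color_of_mem a haD) hxD
    · rwa [contractOn_of_notMem haD] at ha
  have hne : contractOn q D x ≠ contractOn q D y := fun h =>
    hxD (eq_of_color y h.symm ▸ hy)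
  have hstep : BStep (colorState K F (contractOn q D))
      (colorState K F (contractOn q (insert x D))) := by
    rw [← recolor_contractOn hqD hxD hy hxy]
    exact bStep_colorState_recolor hx (hDK hy) hFx hne fun a b hab ha =>
      .inr (congrArg _ (hab.2 (eq_of_color a ha)))
  have hle : prune G q (insert x D) ≤ F := fun a b hab =>
    ⟨⟨hab.1, fun ha => hab.2 (.inr ha)⟩, by
      rintro rfl
      exact absurd (hab.2 (.inl rfl) ▸ hqK a hx) hxD⟩
  exact ((reflTransGen_bStep_colorState_of_le fun _ _ h => h.1).tail hstep).trans
    (reflTransGen_bStep_colorState_of_le hle)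

theorem exists_arc_of_hasInArborescence (hq : HasInArborescence G (colorClass K q x) (q x))
    (hxD : x ∉ D) (hx : x ∈ K) (hqx : q x ∈ D) :
    ∃ x' ∈ K \ D, ∃ y' ∈ D, G x' y' ∧ q x' = q y' := by
  obtain ⟨x', hx', y', hy', hG, hxK, hyK⟩ :=
    exists_step_of_reflTransGen (hq.reach x (mem_colorClass_self hx)) hxD hqx
  exact ⟨x', ⟨hxK.1, hx'⟩, y', hy', hG, hxK.2.trans hyK.2.symm⟩

-- The branch sets grow from their roots `q x`: a vertex `x` with an arc to an already contracted
-- vertex `y` keeps only that arc, has out-degree one, and can be contracted into `y`.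
theorem reflTransGen_bStep_colorState [Finite W]
    (hq : ∀ x ∈ K, HasInArborescence G (colorClass K q x) (q x)) :
    ReflTransGen BStep (initState G) (colorState K (prune G q K) (contractOn q K)) := by
  have q_mem : ∀ x ∈ K, q x ∈ K ∧ q (q x) = q x := fun x hx => (hq x hx).root_mem
  suffices h : ∀ D, q '' K ⊆ D → D ⊆ K →
      ReflTransGen BStep (initState G) (colorState K (prune G q D) (contractOn q D)) →
      ReflTransGen BStep (initState G) (colorState K (prune G q K) (contractOn q K)) by
    have color_root : contractOn q (q '' K) = id := by
      funext z
      by_cases hz : z ∈ q '' K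
      · rw [contractOn_of_mem hz]
        obtain ⟨x, hx, rfl⟩ := hz
        exact (q_mem x hx).2
      · exact contractOn_of_notMem hz
    refine h (q '' K) subset_rfl (Set.image_subset_iff.2 fun x hx => (q_mem x hx).1) ?_
    rw [color_root]
    exact (reflTransGen_bStep_initState G K).trans
      (reflTransGen_bStep_colorState_of_le fun _ _ h => h.1)
  intro D hqD hDK hD
  induction D using WellFoundedGT.induction with
  | ind D ih =>
    by_cases hKD : K ⊆ D
    · exact hDK.antisymm hKD ▸ hD
    obtain ⟨x, hx, hxD⟩ := Set.not_subset.1 hKD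
    have hqK : ∀ z ∈ K, q z ∈ D := fun z hz => hqD ⟨z, hz, rfl⟩
    obtain ⟨x', hx', y', hy', hG, hq'⟩ :=
      exists_arc_of_hasInArborescence (hq x hx) hxD hx (hqK x hx)
    exact ih (insert x' D) (Set.ssubset_insert hx'.2) (hqD.trans (Set.subset_insert x' D))
      (Set.insert_subset hx'.1 hDK)
      (hD.trans (reflTransGen_bStep_insert hqK hDK hx'.1 hx'.2 hy' hG hq'))

end Contract

theorem not_diApex_self {H : V → V → Prop} (hH : ∀ v, ¬ H v v) (o : Option V) :
    ¬ diApex H o o := by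
  rintro (⟨rfl, v, hv⟩ | ⟨u, v, rfl, hv, huv⟩)
  · exact absurd hv (by simp)
  · obtain rfl := Option.some.inj hv
    exact hH u huv

namespace IsRootedModel

variable {G : W → W → Prop} {H : V → V → Prop} {β : V → Set W} {ρ : V → W}

theorem injective (h : IsRootedModel G H Set.univ β ρ) : Function.Injective β := fun u _ huv =>
  h.disjoint.elim_set trivial trivial (ρ u) (h.hasInArborescence u trivial).root_mem
    (huv ▸ (h.hasInArborescence u trivial).root_mem)

theorem exists_root (h : IsRootedModel G H Set.univ β ρ) :
    ∃ q : W → W, ∀ v, ∀ x ∈ β v, q x = ρ v ∧ colorClass (⋃ v, β v) q x = β v := by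
  have eq_of_mem : ∀ {u v x}, x ∈ β u → x ∈ β v → u = v := fun hu hv =>
    h.disjoint.elim_set trivial trivial _ hu hv
  have ρ_mem : ∀ v, ρ v ∈ β v := fun v => (h.hasInArborescence v trivial).root_mem
  have : ∀ x, ∃ y, ∀ v, x ∈ β v → y = ρ v := fun x => by
    by_cases hx : ∃ v, x ∈ β v
    · obtain ⟨v, hv⟩ := hx
      exact ⟨ρ v, fun u hu => congrArg ρ (eq_of_mem hv hu)⟩
    · exact ⟨x, fun v hv => absurd ⟨v, hv⟩ hx⟩
  choose q hq using this
  refine ⟨q, fun v x hx => ⟨hq x v hx, Set.Subset.antisymm ?_ fun z hz => ?_⟩⟩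
  · rintro z ⟨hz, hzx⟩
    obtain ⟨u, hu⟩ := Set.mem_iUnion.1 hz
    rw [hq z u hu, hq x v hx] at hzx
    exact eq_of_mem (hzx ▸ ρ_mem u) (ρ_mem v) ▸ hu
  · exact ⟨Set.mem_iUnion.2 ⟨v, hz⟩, (hq z v hz).trans (hq x v hx).symm⟩

theorem isButterflyMinorWith [Finite W] (h : IsRootedModel G H Set.univ β ρ)
    (hH : ∀ v, ¬ H v v) : IsButterflyMinorWith G H β := by
  obtain ⟨q, hq⟩ := h.exists_root
  have ρ_mem : ∀ v, ρ v ∈ β v := fun v => (h.hasInArborescence v trivial).root_mem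
  have mem_iUnion : ∀ {v x}, x ∈ β v → x ∈ ⋃ v, β v := fun hx => Set.mem_iUnion.2 ⟨_, hx⟩
  have colorClass_eq : ∀ v, ∀ x ∈ β v,
      colorClass (⋃ v, β v) (contractOn q (⋃ v, β v)) x = β v := fun v x hx => by
    rw [← (hq v x hx).2]
    ext z
    simp only [colorClass, Set.mem_ofPred_eq]
    exact and_congr_right fun hz => by
      rw [contractOn_of_mem hz, contractOn_of_mem (mem_iUnion hx)]
  have hcontract := reflTransGen_bStep_colorState (G := G) (K := ⋃ v, β v) (q := q) fun x hx => by
    obtain ⟨v, hv⟩ := Set.mem_iUnion.1 hx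
    rw [(hq v x hv).1, (hq v x hv).2]
    exact h.hasInArborescence v trivial
  refine ⟨⟨Set.range β, fun X Y => ∃ u v, H u v ∧ β u = X ∧ β v = Y⟩,
    hcontract.trans (reflTransGen_bStep_of_subset ?_ ?_ ?_), h.injective, rfl, fun u v => ⟨?_, ?_⟩⟩
  · rintro _ ⟨v, rfl⟩
    exact ⟨ρ v, mem_iUnion (ρ_mem v), colorClass_eq v _ (ρ_mem v)⟩
  · rintro _ _ ⟨u, v, huv, rfl, rfl⟩
    obtain ⟨z, hz, hG⟩ := h.exists_arc u trivial v trivial huv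
    refine ⟨fun he => hH u (h.injective he ▸ huv), ρ u, mem_iUnion (ρ_mem u), z, mem_iUnion hz,
      ⟨hG, fun _ => (hq u _ (ρ_mem u)).1⟩, colorClass_eq u _ (ρ_mem u), colorClass_eq v z hz⟩
  · rintro _ _ ⟨u, v, -, rfl, rfl⟩
    exact ⟨⟨u, rfl⟩, ⟨v, rfl⟩⟩
  · exact fun huv => ⟨u, v, huv, rfl, rfl⟩
  · rintro ⟨u', v', huv, hu, hv⟩
    exact h.injective hu ▸ h.injective hv ▸ huv

end IsRootedModel

theorem reflTransGen_of_reachable_fromRel {E : V → V → Prop} {r a : V}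
    (huniq : Relator.RightUnique E) (hr : ∀ v, ¬ E r v)
    (h : (SimpleGraph.fromRel E).Reachable a r) : ReflTransGen E a r := by
  rw [SimpleGraph.reachable_iff_reflTransGen] at h
  induction h using ReflTransGen.head_induction_on with
  | refl => exact .refl
  | @head a b hab _ ih =>
    rcases ((SimpleGraph.fromRel_adj E a b).1 hab).2 with hab | hba
    · exact .head hab ih
    · rcases ih.cases_head with rfl | ⟨c, hbc, hcr⟩
      · exact absurd hba (hr a)
      · exact huniq hba hbc ▸ hcr

theorem IsInArborescence.rightUnique [Fintype V] {H : V → V → Prop} {r : V}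
    (h : IsInArborescence H r) : Relator.RightUnique H := fun v a b ha hb => by
  have hv : v ≠ r := fun hv => h.2.2.1 a (hv ▸ ha)
  exact (h.2.2.2 v hv).unique ha hb

theorem IsInArborescence.reflTransGen_root [Fintype V] {H : V → V → Prop} {r : V}
    (h : IsInArborescence H r) (v : V) : ReflTransGen H v r :=
  reflTransGen_of_reachable_fromRel h.rightUnique h.2.2.1 (h.2.1.1.preconnected v r)

theorem rel_of_induce_connected {H E : V → V → Prop} {T : Set V} {r u v : V}
    (huniq : Relator.RightUnique H) (hHr : ∀ v, ¬ H r v) (hE : E ≤ H) (hr : r ∈ T)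
    (hT : ((SimpleGraph.fromRel E).induce T).Connected) (hu : u ∈ T) (huv : H u v) : E u v := by
  have hreach : (SimpleGraph.fromRel E).Reachable u r :=
    (hT.preconnected ⟨u, hu⟩ ⟨r, hr⟩).map (SimpleGraph.Embedding.induce T).toHom
  rcases (reflTransGen_of_reachable_fromRel (fun a b c hb hc => huniq (hE a b hb) (hE a c hc))
    (fun v hv => hHr v (hE r v hv)) hreach).cases_head with rfl | ⟨w, huw, -⟩
  · exact absurd huv (hHr v)
  · exact huniq (hE u w huw) huv ▸ huw

theorem exists_bijOn_extending_equiv {S : Set W} {T : Set V} (hT : T.Nonempty) (φ : T ≃ S) :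
    ∃ τ : V → W, Set.BijOn τ T S ∧ ∀ v : T, τ v = φ v := by
  obtain ⟨r, hr⟩ := hT
  let τ : V → W := Function.extend Subtype.val (fun v : T => (φ v : W)) fun _ => φ ⟨r, hr⟩
  have hτ : ∀ v : T, τ v = φ v := fun v => Subtype.val_injective.extend_apply _ _ v
  refine ⟨τ, ⟨fun v hv => hτ ⟨v, hv⟩ ▸ (φ ⟨v, hv⟩).2, fun u hu v hv he => ?_, fun w hw => ?_⟩, hτ⟩
  · rw [hτ ⟨u, hu⟩, hτ ⟨v, hv⟩] at he
    exact congrArg Subtype.val (φ.injective (Subtype.ext he))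
  · exact ⟨φ.symm ⟨w, hw⟩, (φ.symm ⟨w, hw⟩).2, by rw [hτ, φ.apply_symm_apply]⟩

end

theorem wellInConnected_apex_butterfly_minor_general {V W : Type*} [Finite V] [Finite W]
    (H : V → V → Prop) (hirr : ∀ v, ¬ H v v) (huniq : Relator.RightUnique H)
    (G : W → W → Prop) (S : Set W) (hwic : WellInConnected G S)
    (T : Set V) (hclosed : ∀ u ∈ T, ∀ v, H u v → v ∈ T)
    (hreach : ∀ v, ∃ u ∈ T, Relation.ReflTransGen H v u)
    (τ : V → W) (hτ : Set.BijOn τ T S) (harc : ∀ u ∈ T, ∀ v, H u v → G (τ u) (τ v))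
    (hloop : ∀ w ∉ S, ¬ G w w) (hdeg : ∀ w ∉ S, Nat.card V ≤ outDeg G w) :
    ∃ β : Option V → Set W, IsButterflyMinorWith G (diApex H) β ∧ ∃ w : W, β none = {w} := by
  have hS : IsTightModel G H T S Set.univ (fun v => {τ v}) τ τ :=
    { hasInArborescence := fun v _ => .singleton G (τ v)
      disjoint := fun u hu v hv hne => Set.disjoint_singleton.2 fun he => hne (hτ.injOn hu hv he)
      exists_arc := fun u hu v _ huv => ⟨τ v, rfl, harc u hu v huv⟩
      isTight := hwic.isTight
      closed := hclosed
      subset := fun v hv => Set.singleton_subset_iff.2 (hτ.mapsTo hv)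
      mem := fun v _ => rfl
      image_eq := by rw [hτ.image_eq, Set.inter_univ] }
  obtain ⟨A, B, β, ρ, τ', -, hA⟩ := hS.exists_univ hirr huniq hreach hloop hdeg
  obtain ⟨w, hw⟩ := hA.isTight.nonempty
  obtain ⟨β', ρ', hβ', hnone⟩ := hA.exists_addApex hw
  exact ⟨β', hβ'.isButterflyMinorWith (not_diApex_self hirr), w, hnone⟩

/-- Lemma: let `H` be an in-arborescence on `t ≥ 1` vertices with root `r`, and let `S` be
well-in-connected in a digraph `G` such that `G[S]` is isomorphic to a weakly connected
subdigraph of `H` containing `r`. If every vertex outside `S` has out-degree at least `t`,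
then `G` contains `H⁺` as a butterfly minor whose apex-source branch set is a singleton. -/
theorem wellInConnected_apex_butterfly_minor
    {V W : Type*} [Fintype V] [Fintype W] (hV : 0 < Fintype.card V)
    (H : V → V → Prop) (r : V) (hH : IsInArborescence H r)
    (G : W → W → Prop) (hG : Irreflexive G)
    (S : Set W) (hwic : WellInConnected G S)
    (hiso : ∃ (T : Set V) (E : V → V → Prop),
      (∀ a b : V, E a b → H a b ∧ a ∈ T ∧ b ∈ T) ∧ r ∈ T ∧
      ((SimpleGraph.fromRel E).induce T).Connected ∧
      ∃ φ : ↥S ≃ ↥T, ∀ x y : ↥S, G (x : W) (y : W) ↔ E ((φ x : ↥T) : V) ((φ y : ↥T) : V))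
    (hdeg : ∀ w ∉ S, Fintype.card V ≤ outDeg G w) :
    ∃ β : Option V → Set W, IsButterflyMinorWith G (diApex H) β ∧ ∃ w : W, β none = {w} := by
  obtain ⟨T, E, hE, hr, hT, φ, hφ⟩ := hiso
  have hHE : ∀ u ∈ T, ∀ v, H u v → E u v := fun u hu v huv =>
    rel_of_induce_connected hH.rightUnique hH.2.2.1 (fun a b hab => (hE a b hab).1) hr hT hu huv
  obtain ⟨τ, hτ, hτφ⟩ := exists_bijOn_extending_equiv ⟨r, hr⟩ φ.symm
  have harc : ∀ u ∈ T, ∀ v, H u v → G (τ u) (τ v) := fun u hu v huv => by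
    have hv : v ∈ T := (hE u v (hHE u hu v huv)).2.2
    rw [hτφ ⟨u, hu⟩, hτφ ⟨v, hv⟩, hφ, φ.apply_symm_apply, φ.apply_symm_apply]
    exact hHE u hu v huv
  exact wellInConnected_apex_butterfly_minor_general H hH.1 hH.rightUnique G S hwic T
    (fun u hu v huv => (hE u v (hHE u hu v huv)).2.2) (fun v => ⟨r, hr, hH.reflTransGen_root v⟩)
    τ hτ harc (fun w _ => hG w) (Nat.card_eq_fintype_card (α := V) ▸ hdeg)
end

section
/- Let t ≥ 2 be an integer. Let G⃗ be a strongly connected digraph and let S be a subset of V(G⃗) such that: every vertex in V(G⃗)∖S has out-degree at least t in G⃗; there exist a directed cycle C in G⃗[S] and |∂⁻(S)| pairwise disjoint directed paths in G⃗ from ∂⁻(S) to V(C) internally disjoint from V(C); and there exists an arc (x,y) ∈ E(G⃗) with x ∈ V(C) and y ∈ V(G⃗)∖S. Then G⃗ contains a subdivision of W⃗_t¹ or a subdivision of W⃗_{t+1}². -/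
/-- The directed cycle on `t` vertices. -/
def dirCycle (t : ℕ) : Fin t → Fin t → Prop := fun i j => (j : ℕ) = ((i : ℕ) + 1) % t

/-- `W⃗_t¹`: the digraph obtained from `C⃗_t⁺` by adding an arc from one vertex of the cycle
to the apex source. -/
def dirW1 (t : ℕ) : Option (Fin t) → Option (Fin t) → Prop := fun a b =>
  diApex (dirCycle t) a b ∨ ((∃ u : Fin t, a = some u ∧ (u : ℕ) = 0) ∧ b = none)

/-- `W⃗_t²`: the digraph obtained from `C⃗_t⁺` by reversing one arc from the apex source to
the cycle. -/
def dirW2 (t : ℕ) : Option (Fin t) → Option (Fin t) → Prop := fun a b =>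
  (∃ u v, a = some u ∧ b = some v ∧ dirCycle t u v) ∨
  (a = none ∧ ∃ v : Fin t, b = some v ∧ (v : ℕ) ≠ 0) ∨
  ((∃ u : Fin t, a = some u ∧ (u : ℕ) = 0) ∧ b = none)

/-- `∂⁻(S)`: the set of vertices of `S` having an in-neighbour outside `S`. -/
def inBoundary {W : Type*} (G : W → W → Prop) (S : Set W) : Set W :=
  {v | v ∈ S ∧ ∃ u, u ∉ S ∧ G u v}

/-! If no set between `C` and `V \ {y}` has in-boundary smaller than `t`, Menger's theorem
gives a fan of `t` paths from `y` to `C`; together with `C` and the arc `(x, y)` it is a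
subdivision of `W⃗_t¹` or `W⃗_{t+1}²`, according to whether `x` is an end of the fan.

Otherwise take a minimum such cut. By submodularity it can be chosen as `∂⁻(R)` with
`S ⊆ R`, so `|∂⁻(R)| < t`. The minimality of `R` links all of `∂⁻(R)` to `C` inside `R`, and
makes each vertex of `∂⁻(R)` reachable from `y` outside `R`. So `C` can be rerouted: leave
it along `(x, y)`, follow a shortest path from `y` to a vertex `v` of `∂⁻(R)`, then the
linkage path from `v`, where `v` is chosen so that this linkage path has its end first on
`C` after `x`. The new cycle contains all ends of the linkage. The shortest path, `v`
included, meets at most one out-neighbour of `y`, so at most `|∂⁻(R)|` of them lie in `R` or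
on the path. Hence `y` has an out-neighbour beyond both, and the situation recurs with `R`
and the path in place of `S`. -/

section Cuts

variable {W : Type*} {G : W → W → Prop} {K S T X Z : Set W} {n : ℕ}

/-- Every set between `K` and `X` has in-boundary of size at least `n`. By Menger's theorem this is
the condition for `n` disjoint paths to run from `∂⁻(X)` to `K` inside `X`. -/
def HasCutBound (G : W → W → Prop) (K X : Set W) (n : ℕ) : Prop :=
  ∀ T, K ⊆ T → T ⊆ X → n ≤ (inBoundary G T).ncard

theorem ncard_inBoundary_inter_add_ncard_inBoundary_union_le [Finite W] (G : W → W → Prop)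
    (S T : Set W) :
    (inBoundary G (S ∩ T)).ncard + (inBoundary G (S ∪ T)).ncard ≤
      (inBoundary G S).ncard + (inBoundary G T).ncard := by
  have hunion : inBoundary G (S ∩ T) ∪ inBoundary G (S ∪ T) ⊆
      inBoundary G S ∪ inBoundary G T := by
    rintro w (⟨⟨hwS, hwT⟩, u, hu, huw⟩ | ⟨hwS | hwT, u, hu, huw⟩)
    · by_cases huS : u ∈ S
      · exact Or.inr ⟨hwT, u, fun huT => hu ⟨huS, huT⟩, huw⟩
      · exact Or.inl ⟨hwS, u, huS, huw⟩
    · exact Or.inl ⟨hwS, u, fun huS => hu (Or.inl huS), huw⟩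
    · exact Or.inr ⟨hwT, u, fun huT => hu (Or.inr huT), huw⟩
  have hinter : inBoundary G (S ∩ T) ∩ inBoundary G (S ∪ T) ⊆
      inBoundary G S ∩ inBoundary G T := by
    rintro w ⟨⟨⟨hwS, hwT⟩, _⟩, _, u, hu, huw⟩
    exact ⟨⟨hwS, u, fun huS => hu (Or.inl huS), huw⟩, hwT, u, fun huT => hu (Or.inr huT), huw⟩
  rw [← Set.ncard_union_add_ncard_inter _ _, ← Set.ncard_union_add_ncard_inter (inBoundary G S)]
  exact Nat.add_le_add (Set.ncard_le_ncard hunion) (Set.ncard_le_ncard hinter)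

theorem HasCutBound.ncard_inBoundary_union_le [Finite W] (hKS : K ⊆ S)
    (hcut : HasCutBound G K S (inBoundary G S).ncard) (hKT : K ⊆ T) :
    (inBoundary G (S ∪ T)).ncard ≤ (inBoundary G T).ncard := by
  have hsub := ncard_inBoundary_inter_add_ncard_inBoundary_union_le G S T
  have hle := hcut (S ∩ T) (Set.subset_inter hKS hKT) Set.inter_subset_left
  omega

theorem HasCutBound.union [Finite W] (hKS : K ⊆ S)
    (hcut : HasCutBound G K S (inBoundary G S).ncard) (Z : Set W) :
    HasCutBound G (K ∪ Z) (S ∪ Z) (inBoundary G (S ∪ Z)).ncard := by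
  intro T hKT hTS
  obtain ⟨hKT, hZT⟩ := Set.union_subset_iff.1 hKT
  have hST : S ∪ T = S ∪ Z := subset_antisymm
    (Set.union_subset Set.subset_union_left hTS) (Set.union_subset_union_right S hZT)
  exact hST ▸ hcut.ncard_inBoundary_union_le hKS hKT

theorem HasCutBound.mono_left (hcut : HasCutBound G K X n) {K' : Set W} (hK : K ⊆ K') :
    HasCutBound G K' X n :=
  fun T hKT hTX => hcut T (hK.trans hKT) hTX

theorem exists_mem_inBoundary_of_isChain {l : List W} {a b : W} (hl : l.IsChain G)
    (ha : l.head? = some a) (hb : l.getLast? = some b) (hbT : b ∈ T)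
    (haT : a ∈ T → a ∈ inBoundary G T) : ∃ u ∈ l, u ∈ inBoundary G T := by
  induction l generalizing a with
  | nil => simp at ha
  | cons v l ih =>
    obtain rfl : v = a := by simpa using ha
    by_cases hv : v ∈ T
    · exact ⟨v, List.mem_cons_self, haT hv⟩
    cases l with
    | nil =>
      obtain rfl : v = b := by simpa using hb
      exact absurd hbT hv
    | cons w l =>
      rw [List.isChain_cons_cons] at hl
      obtain ⟨u, hu, huT⟩ := ih hl.2 rfl (by simpa using hb) fun hw => ⟨hw, v, hv, hl.1⟩
      exact ⟨u, List.mem_cons_of_mem _ hu, huT⟩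

theorem hasCutBound_of_disjoint_isChain [Finite W] {L : W → List W}
    (hchain : ∀ v ∈ inBoundary G S, (L v).IsChain G)
    (hhead : ∀ v ∈ inBoundary G S, (L v).head? = some v)
    (hlast : ∀ v ∈ inBoundary G S, ∃ k ∈ K, (L v).getLast? = some k)
    (hdisj : (inBoundary G S).Pairwise fun v w => (L v).Disjoint (L w)) :
    HasCutBound G K S (inBoundary G S).ncard := by
  intro T hKT hTS
  have hmeet : ∀ v ∈ inBoundary G S, ∃ u ∈ L v, u ∈ inBoundary G T := by
    rintro v hv
    obtain ⟨k, hk, hlast⟩ := hlast v hv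
    obtain ⟨_, w, hw, hwv⟩ := id hv
    exact exists_mem_inBoundary_of_isChain (hchain v hv) (hhead v hv) hlast (hKT hk)
      fun hvT => ⟨hvT, w, fun hwT => hw (hTS hwT), hwv⟩
  choose! g hgL hgT using hmeet
  refine Set.ncard_le_ncard_of_injOn g hgT fun v hv w hw hvw => ?_
  by_contra hne
  exact hdisj hv hw hne (hgL v hv) (hvw ▸ hgL w hw)

end Cuts

section Orbits

variable {W : Type*} {f : W → W} {U A X : Set W} {a b : W} {i j : ℕ}

theorem iterate_mem_of_forall_lt (hf : ∀ u ∈ U, f u ∈ X) (ha : a ∈ X)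
    (hi : ∀ m < i, f^[m] a ∈ U) : f^[i] a ∈ X := by
  cases i with
  | zero => exact ha
  | succ i =>
    rw [Function.iterate_succ_apply']
    exact hf _ (hi i i.lt_succ_self)

theorem eq_of_iterate_eq_iterate (hinj : U.InjOn f) (hA : ∀ u ∈ U, f u ∉ A) (ha : a ∈ A)
    (hb : b ∈ A) (hi : ∀ m < i, f^[m] a ∈ U) (hj : ∀ m < j, f^[m] b ∈ U)
    (h : f^[i] a = f^[j] b) : i = j ∧ a = b := by
  induction i generalizing j with
  | zero =>
    cases j with
    | zero => exact ⟨rfl, h⟩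
    | succ j =>
      rw [Function.iterate_succ_apply'] at h
      exact absurd (h ▸ ha) (hA _ (hj j j.lt_succ_self))
  | succ i ih =>
    cases j with
    | zero =>
      rw [Function.iterate_succ_apply'] at h
      exact absurd (h ▸ hb) (hA _ (hi i i.lt_succ_self))
    | succ j =>
      rw [Function.iterate_succ_apply', Function.iterate_succ_apply'] at h
      obtain ⟨hij, hab⟩ := ih (fun m hm => hi m (by omega)) (fun m hm => hj m (by omega))
        (hinj (hi i i.lt_succ_self) (hj j j.lt_succ_self) h)
      exact ⟨congrArg Nat.succ hij, hab⟩

theorem exists_iterate_notMem [Finite W] (hinj : U.InjOn f) (hA : ∀ u ∈ U, f u ∉ A)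
    (ha : a ∈ A) : ∃ n, f^[n] a ∉ U ∧ ∀ m < n, f^[m] a ∈ U := by
  classical
  have hexit : ∃ n, f^[n] a ∉ U := by
    by_contra! hU
    exact not_injective_infinite_finite (fun n => f^[n] a) fun i j hij =>
      (eq_of_iterate_eq_iterate hinj hA ha ha (fun m _ => hU m) (fun m _ => hU m) hij).1
  exact ⟨Nat.find hexit, Nat.find_spec hexit, fun m hm => not_not.1 (Nat.find_min hexit hm)⟩

end Orbits

section Menger

variable {W : Type*} {G : W → W → Prop} {K X A : Set W} {n : ℕ}

/-- A family of pairwise disjoint directed paths from `A` to `K` inside `X`, meeting `K` only in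
their ends: the path from `a ∈ A` has vertex list `I a ++ [e a]`. -/
structure IsLinkage_s19 (G : W → W → Prop) (X A K : Set W) (I : W → List W) (e : W → W) : Prop where
  isChain : ∀ a ∈ A, (I a ++ [e a]).IsChain G
  head? : ∀ a ∈ A, (I a ++ [e a]).head? = some a
  nodup : ∀ a ∈ A, (I a ++ [e a]).Nodup
  end_mem : ∀ a ∈ A, e a ∈ K
  mem_diff : ∀ a ∈ A, ∀ u ∈ I a, u ∈ X \ K
  disjoint : A.Pairwise fun a b => (I a ++ [e a]).Disjoint (I b ++ [e b])

theorem IsLinkage_s19.injOn {I : W → List W} {e : W → W} (h : IsLinkage_s19 G X A K I e) :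
    A.InjOn e := by
  intro a ha b hb hab
  by_contra hne
  exact h.disjoint ha hb hne (by simp : e a ∈ I a ++ [e a]) (by simp [hab])

theorem exists_isLinkage_of_injOn [Finite W] {f : W → W} (hAX : A ⊆ X)
    (hinj : (X \ K).InjOn f) (hA : ∀ u ∈ X \ K, f u ∉ A)
    (hf : ∀ u ∈ X \ K, f u ∈ X ∧ (f u = u ∨ G u (f u))) :
    ∃ I e, IsLinkage_s19 G X A K I e := by
  have hexit : ∀ a ∈ A, ∃ n, f^[n] a ∉ X \ K ∧ ∀ m < n, f^[m] a ∈ X \ K :=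
    fun a ha => exists_iterate_notMem hinj hA ha
  choose! n hn hlt using hexit
  have heq : ∀ a ∈ A, ∀ b ∈ A, ∀ i ≤ n a, ∀ j ≤ n b, f^[i] a = f^[j] b → i = j ∧ a = b :=
    fun a ha b hb i hi j hj => eq_of_iterate_eq_iterate hinj hA ha hb
      (fun m hm => hlt a ha m (by omega)) fun m hm => hlt b hb m (by omega)
  have hpath : ∀ a, (List.range (n a)).map (f^[·] a) ++ [f^[n a] a] =
      (List.range (n a + 1)).map (f^[·] a) := by simp [List.range_succ]
  refine ⟨fun a => (List.range (n a)).map (f^[·] a), fun a => f^[n a] a, ?_, ?_, ?_, ?_, ?_, ?_⟩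
  · intro a ha
    rw [hpath, List.isChain_iff_getElem]
    intro i hi
    simp only [List.length_map, List.length_range] at hi
    simp only [List.getElem_map, List.getElem_range, Function.iterate_succ_apply']
    refine (hf _ (hlt a ha i (by omega))).2.resolve_left fun hfix => ?_
    rw [← Function.iterate_succ_apply' f] at hfix
    exact i.succ_ne_self (heq a ha a ha _ (by omega) _ (by omega) hfix).1
  · intro a _
    rw [hpath]
    simp [List.range_succ_eq_map]
  · intro a ha
    rw [hpath]
    refine List.Nodup.map_on (fun i hi j hj hij => ?_) List.nodup_range
    simp only [List.mem_range] at hi hj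
    exact (heq a ha a ha i (by omega) j (by omega) hij).1
  · intro a ha
    have hX := iterate_mem_of_forall_lt (fun u hu => (hf u hu).1) (hAX ha) (hlt a ha)
    exact not_not.1 fun hK => hn a ha ⟨hX, hK⟩
  · simp only [List.mem_map, List.mem_range]
    rintro a ha _ ⟨i, hi, rfl⟩
    exact hlt a ha i hi
  · simp only [hpath]
    intro a ha b hb hab u hua hub
    obtain ⟨i, hi, rfl⟩ := List.mem_map.1 hua
    obtain ⟨j, hj, hij⟩ := List.mem_map.1 hub
    rw [List.mem_range] at hi hj
    exact hab (heq a ha b hb i (by omega) j (by omega) hij.symm).2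

theorem exists_injective_forall_mem_of_card_le_ncard [Finite W] {ι : Type*} (t : ι → Set W)
    (h : ∀ s : Finset ι, s.card ≤ (⋃ i ∈ s, t i).ncard) :
    ∃ f : ι → W, Function.Injective f ∧ ∀ i, f i ∈ t i := by
  classical
  obtain ⟨f, hf, hmem⟩ := (Finset.all_card_le_biUnion_card_iff_exists_injective
    fun i => (t i).toFinite.toFinset).1 fun s =>
      (h s).trans_eq <| by rw [← Set.ncard_coe_finset]; congr 1; ext; simp
  exact ⟨f, hf, by simpa using hmem⟩

theorem HasCutBound.le_ncard_sdiff [Finite W] (hKX : K ⊆ X) (hcut : HasCutBound G K X n)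
    {U : Set W} (hU : U ⊆ X \ K) :
    n ≤ ((inBoundary G X ∪ {w | w ∈ X ∧ ∃ u ∈ U, G u w}) \ U).ncard := by
  refine (hcut (X \ U) (fun k hk => ⟨hKX hk, fun hkU => (hU hkU).2 hk⟩) Set.sdiff_subset).trans
    (Set.ncard_le_ncard ?_)
  rintro w ⟨⟨hwX, hwU⟩, u, hu, huw⟩
  refine ⟨?_, hwU⟩
  by_cases huX : u ∈ X
  · exact .inr ⟨hwX, u, not_not.1 fun huU => hu ⟨huX, huU⟩, huw⟩
  · exact .inl ⟨hwX, u, huX, huw⟩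

/-- The cut condition on the sets `X \ U` is Hall's condition for choosing `n` starting points
in `∂⁻(X)` together with a successor, possibly itself, of each vertex of `X \ K`. -/
theorem HasCutBound.exists_injOn [Finite W] (hKX : K ⊆ X) (hcut : HasCutBound G K X n) :
    ∃ A ⊆ inBoundary G X, A.ncard = n ∧ ∃ f : W → W, (X \ K).InjOn f ∧
      (∀ u ∈ X \ K, f u ∉ A) ∧ ∀ u ∈ X \ K, f u ∈ X ∧ (f u = u ∨ G u (f u)) := by
  classical
  let t : ↥(X \ K) ⊕ Fin n → Set W :=
    Sum.elim (fun u => {w | w ∈ X ∧ (w = u ∨ G u w)}) fun _ => inBoundary G X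
  obtain ⟨g, hg, hgt⟩ := exists_injective_forall_mem_of_card_le_ncard t fun s => by
    set N := ⋃ i ∈ s, t i
    let U : Set W := (↑) '' (s.toLeft : Set ↥(X \ K))
    have hUcard : U.ncard = s.toLeft.card := by
      rw [Set.ncard_image_of_injective _ Subtype.val_injective, Set.ncard_coe_finset]
    have hUN : U ⊆ N := by
      rintro _ ⟨u, hu, rfl⟩
      exact Set.mem_biUnion (Finset.mem_toLeft.1 hu) ⟨u.2.1, Or.inl rfl⟩
    have hscard := s.card_toLeft_add_card_toRight
    obtain hright | ⟨j, hj⟩ := s.toRight.eq_empty_or_nonempty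
    · rw [hright, Finset.card_empty, add_zero] at hscard
      exact hscard ▸ hUcard ▸ Set.ncard_le_ncard hUN
    have hsub : inBoundary G X ∪ {w | w ∈ X ∧ ∃ u ∈ U, G u w} ⊆ N := by
      rintro w (hw | ⟨hwX, _, ⟨u, hu, rfl⟩, huw⟩)
      · exact Set.mem_biUnion (Finset.mem_toRight.1 hj) hw
      · exact Set.mem_biUnion (Finset.mem_toLeft.1 hu) ⟨hwX, .inr huw⟩
    have hle := (hcut.le_ncard_sdiff hKX (U := U) (by rintro _ ⟨u, -, rfl⟩; exact u.2)).trans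
      (Set.ncard_le_ncard (Set.sdiff_subset_sdiff_left hsub))
    have hright : s.toRight.card ≤ n := by simpa using Finset.card_le_univ s.toRight
    have hdiff := Set.ncard_sdiff_add_ncard_of_subset hUN
    omega
  refine ⟨Set.range (g ∘ Sum.inr), ?_, ?_, fun u => if hu : u ∈ X \ K then g (.inl ⟨u, hu⟩) else u,
    fun u hu v hv huv => ?_, fun u hu => ?_, fun u hu => ?_⟩
  · rintro _ ⟨j, rfl⟩
    exact hgt (.inr j)
  · rw [← Set.image_univ, Set.ncard_image_of_injective _ (hg.comp Sum.inr_injective),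
      Set.ncard_univ, Nat.card_fin]
  · simp only [dif_pos hu, dif_pos hv] at huv
    simpa using hg huv
  · simp only [dif_pos hu]
    rintro ⟨j, hj⟩
    simpa using hg hj
  · simp only [dif_pos hu]
    exact hgt (.inl ⟨u, hu⟩)

theorem HasCutBound.exists_isLinkage [Finite W] (hKX : K ⊆ X) (hcut : HasCutBound G K X n) :
    ∃ A ⊆ inBoundary G X, A.ncard = n ∧ ∃ I e, IsLinkage_s19 G X A K I e := by
  obtain ⟨A, hAX, hAn, f, hinj, hfA, hf⟩ := hcut.exists_injOn hKX
  exact ⟨A, hAX, hAn, exists_isLinkage_of_injOn (fun a ha => (hAX ha).1) hinj hfA hf⟩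

theorem IsLinkage_s19.hasCutBound [Finite W] {S : Set W} {I : W → List W} {e : W → W}
    (h : IsLinkage_s19 G X (inBoundary G S) K I e) :
    HasCutBound G (e '' inBoundary G S) S (inBoundary G S).ncard :=
  hasCutBound_of_disjoint_isChain h.isChain h.head?
    (fun v hv => ⟨e v, Set.mem_image_of_mem e hv, by simp⟩) h.disjoint

/-- A fan of directed paths from `y` to `B`, disjoint except in `y` and meeting `K ⊇ B` only in
their ends: the path to `b ∈ B` has vertex list `y :: (F b ++ [b])`. -/
structure IsFan (G : W → W → Prop) (K : Set W) (y : W) (B : Set W) (F : W → List W) : Prop where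
  subset : B ⊆ K
  isChain : ∀ b ∈ B, (y :: (F b ++ [b])).IsChain G
  nodup : ∀ b ∈ B, (y :: (F b ++ [b])).Nodup
  notMem : ∀ b ∈ B, ∀ u ∈ F b, u ∉ K
  disjoint : B.Pairwise fun b c => (F b).Disjoint (F c)

theorem IsLinkage_s19.exists_isFan {y : W} {I : W → List W} {e : W → W}
    (h : IsLinkage_s19 G {y}ᶜ A K I e) (hA : ∀ a ∈ A, G y a) (hy : y ∉ K) :
    ∃ F, IsFan G K y (e '' A) F := by
  have hstart : ∀ b ∈ e '' A, ∃ a ∈ A, e a = b := fun b hb => hb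
  choose! s hs hes using hstart
  refine ⟨fun b => I (s b), ?_, ?_, ?_, ?_, ?_⟩
  · rintro _ ⟨a, ha, rfl⟩
    exact h.end_mem a ha
  · intro b hb
    have hchain := h.isChain _ (hs b hb)
    have hhead := h.head? _ (hs b hb)
    rw [hes b hb] at hchain hhead
    rw [List.isChain_cons, hhead]
    exact ⟨by rintro _ ⟨⟩; exact hA _ (hs b hb), hchain⟩
  · intro b hb
    have hend := h.end_mem _ (hs b hb)
    have hnodup := h.nodup _ (hs b hb)
    rw [hes b hb] at hend hnodup
    refine List.nodup_cons.2 ⟨fun hmem => ?_, hnodup⟩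
    obtain hmem | hmem := List.mem_append.1 hmem
    · exact (h.mem_diff _ (hs b hb) y hmem).1 rfl
    · exact hy (List.mem_singleton.1 hmem ▸ hend)
  · exact fun b hb u hu => (h.mem_diff _ (hs b hb) u hu).2
  · intro b hb c hc hbc
    have hne : s b ≠ s c := fun hsbc => hbc <| by rw [← hes b hb, hsbc, hes c hc]
    exact fun u hub huc => h.disjoint (hs b hb) (hs c hc) hne (List.mem_append_left _ hub)
      (List.mem_append_left _ huc)

theorem HasCutBound.exists_isFan [Finite W] {y : W} (hy : y ∉ K)
    (hcut : HasCutBound G K {y}ᶜ n) : ∃ B F, B.ncard = n ∧ IsFan G K y B F := by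
  obtain ⟨A, hAy, hAn, I, e, hlink⟩ := hcut.exists_isLinkage (Set.subset_compl_singleton_iff.2 hy)
  have hadj : ∀ a ∈ A, G y a := by
    intro a ha
    obtain ⟨-, u, hu, hua⟩ := hAy ha
    exact (not_not.1 hu : u = y) ▸ hua
  obtain ⟨F, hF⟩ := hlink.exists_isFan hadj hy
  exact ⟨e '' A, F, by rw [hlink.injOn.ncard_image, hAn], hF⟩

end Menger

section Wheels

variable {W : Type*} {G : W → W → Prop} {c : ℕ → W} {N s : ℕ}

/-- The directed cycle on `s` vertices together with a hub `none`, arcs from the hub to the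
vertices in `Z`, and an arc from vertex `0` to the hub. -/
def partialWheel (Z : Set (Fin s)) : Option (Fin s) → Option (Fin s) → Prop
  | some i, some k => dirCycle s i k
  | none, some k => k ∈ Z
  | some i, none => (i : ℕ) = 0
  | none, none => False

theorem dirW1_eq_partialWheel (s : ℕ) : dirW1 s = partialWheel Set.univ := by
  funext a b
  cases a <;> cases b <;> simp [dirW1, diApex, partialWheel]

theorem dirW2_eq_partialWheel (s : ℕ) : dirW2 s = partialWheel {k | (k : ℕ) ≠ 0} := by
  funext a b
  cases a <;> cases b <;> simp [dirW2, partialWheel]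

theorem exists_eq_coe_cons_of_mem {C : Cycle W} {x : W} (hx : x ∈ C) :
    ∃ M : List W, C = ↑(x :: M) := by
  induction C using Quotient.inductionOn' with | _ l =>
  obtain ⟨l₁, l₂, rfl⟩ := List.append_of_mem (Cycle.mem_coe_iff.1 hx)
  exact ⟨l₂ ++ l₁, Cycle.coe_eq_coe.2 List.isRotated_append⟩

theorem exists_periodic_of_mem_cycle {C : Cycle W} {x : W} (hchain : C.Chain G) (hnodup : C.Nodup)
    (hx : x ∈ C) : ∃ N > 0, ∃ c : ℕ → W, c 0 = x ∧ (∀ i, G (c i) (c (i + 1))) ∧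
      (∀ p q, c p = c q ↔ p ≡ q [MOD N]) ∧ Set.range c = {u | u ∈ C} := by
  obtain ⟨M, rfl⟩ := exists_eq_coe_cons_of_mem hx
  rw [Cycle.chain_coe_cons, List.isChain_iff_getElem] at hchain
  have hlt : ∀ i, i % (x :: M).length < (x :: M).length := fun i => Nat.mod_lt i (by simp)
  have hwrap : ∀ k (hk : k < ((x :: M) ++ [x]).length),
      ((x :: M) ++ [x])[k] = (x :: M)[k % (x :: M).length]'(hlt k) := by
    intro k hk
    rw [List.length_append, List.length_singleton, Nat.lt_succ_iff_lt_or_eq] at hk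
    obtain hk | rfl := hk
    · simp only [List.getElem_append_left hk, Nat.mod_eq_of_lt hk]
    · simp
  refine ⟨(x :: M).length, by simp, fun i => (x :: M)[i % (x :: M).length]'(hlt i), by simp,
    fun i => ?_, fun p q => (Cycle.nodup_coe_iff.1 hnodup).getElem_inj_iff, ?_⟩
  · have hG := hchain (i % (x :: M).length) (by simpa using hlt i)
    simpa only [← List.cons_append, hwrap, Nat.mod_mod, Nat.mod_add_mod] using hG
  · ext u
    rw [Set.mem_range, Set.mem_ofPred_eq, Cycle.mem_coe_iff, List.mem_iff_getElem]
    constructor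
    · rintro ⟨i, rfl⟩
      exact ⟨_, hlt i, rfl⟩
    · rintro ⟨i, hi, rfl⟩
      exact ⟨i, by simp only [Nat.mod_eq_of_lt hi]⟩

theorem exists_strictMono_forall_mem (hN : 0 < N) (hc : ∀ p q, c p = c q ↔ p ≡ q [MOD N])
    {R : Set W} (hR : R ⊆ Set.range c) (h0 : c 0 ∈ R) :
    ∃ j : ℕ → ℕ, StrictMono j ∧ j 0 = 0 ∧ j R.ncard = N ∧ ∀ k, c (j k) ∈ R := by
  classical
  have hNR : ∀ k, c (N * k) ∈ R := fun k => (hc _ _).2 (Nat.modEq_zero_iff_dvd.2 ⟨k, rfl⟩) ▸ h0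
  have hinf : {m | c m ∈ R}.Infinite :=
    Set.infinite_of_injective_forall_mem (fun _ _ => Nat.eq_of_mul_eq_mul_left hN) hNR
  have hcount : Nat.count (c · ∈ R) N = R.ncard := by
    rw [Nat.count_eq_card_filter_range, ← Set.ncard_coe_finset]
    refine Set.ncard_congr (fun m _ => c m) (fun m hm => ?_) (fun p q hp hq hpq => ?_)
      fun u hu => ?_
    · exact (Finset.mem_filter.1 hm).2
    · simp only [Finset.coe_filter, Finset.mem_range, Set.mem_ofPred_eq] at hp hq
      exact ((hc p q).1 hpq).eq_of_lt_of_lt hp.1 hq.1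
    · obtain ⟨m, rfl⟩ := hR hu
      have hmod : c (m % N) = c m := (hc _ _).2 (Nat.mod_modEq m N)
      exact ⟨m % N, by simp [Nat.mod_lt, hN, hmod, hu], hmod⟩
  refine ⟨Nat.nth (c · ∈ R), Nat.nth_strictMono hinf, Nat.nth_zero_of_zero h0, ?_,
    fun k => Nat.nth_mem_of_infinite hinf k⟩
  rw [← hcount, Nat.nth_count (by simpa using hNR 1)]

theorem cons_map_Ico_append {a b : ℕ} (c : ℕ → W) (hab : a < b) :
    c a :: ((List.Ico (a + 1) b).map c ++ [c b]) = (List.Ico a (b + 1)).map c := by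
  rw [List.Ico.succ_top hab.le, List.Ico.eq_cons hab, List.map_append, List.map_cons,
    List.cons_append, List.map_singleton]

theorem isChain_map_Ico (hG : ∀ i, G (c i) (c (i + 1))) (a b : ℕ) :
    ((List.Ico a b).map c).IsChain G :=
  (List.isChain_map c).2 <| (List.Ico.isChain_succ a b).imp <| by
    rintro i _ rfl
    exact hG i

theorem nodup_map_Ico (hc : ∀ p q, c p = c q ↔ p ≡ q [MOD N]) {a b : ℕ} (hab : b ≤ a + N) :
    ((List.Ico a b).map c).Nodup := by
  refine (List.Ico.nodup a b).map_on fun p hp q hq hpq => ?_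
  rw [List.Ico.mem] at hp hq
  have hmod := (hc p q).1 hpq
  exact (hmod.le_of_lt_add (by omega)).antisymm (hmod.symm.le_of_lt_add (by omega))

/-- A subdivision in `G` of the directed cycle on `s` vertices with all its vertices in `K`: the
branch vertices are `f i`, and `Q i` lists the internal vertices of the path leaving `f i`. -/
structure IsSubdividedCycle (G : W → W → Prop) (K : Set W) (f : Fin s → W)
    (Q : Fin s → List W) : Prop where
  injective : Function.Injective f
  branch_mem : ∀ i, f i ∈ K
  mem : ∀ i, ∀ u ∈ Q i, u ∈ K
  isChain : ∀ i k, dirCycle s i k → (f i :: (Q i ++ [f k])).IsChain G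
  nodup : ∀ i k, dirCycle s i k → (f i :: (Q i ++ [f k])).Nodup
  notMem_range : ∀ i, ∀ u ∈ Q i, u ∉ Set.range f
  disjoint : Pairwise fun i k => (Q i).Disjoint (Q k)

theorem apply_eq_apply_succ_of_dirCycle {α : Type*} {g : ℕ → α} (hg : g s = g 0) {i k : Fin s}
    (hik : dirCycle s i k) : g k = g (i + 1) := by
  rw [hik]
  obtain hi | hi := (show (i : ℕ) + 1 ≤ s from i.2).lt_or_eq
  · rw [Nat.mod_eq_of_lt hi]
  · rw [hi, Nat.mod_self, hg]

theorem apply_succ_lt_add_of_strictMono {j : ℕ → ℕ} (hj : StrictMono j) (hs : 2 ≤ s) {i : ℕ}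
    (hi : i < s) : j (i + 1) < j i + j s := by
  have hle : j (i + 1) ≤ j s := hj.monotone hi
  obtain rfl | hpos := i.eq_zero_or_pos
  · have hlt : j (0 + 1) < j s := hj (by omega)
    omega
  · have hlt := hj hpos
    omega

theorem isSubdividedCycle_of_strictMono (hs : 2 ≤ s) (hG : ∀ i, G (c i) (c (i + 1)))
    (hc : ∀ p q, c p = c q ↔ p ≡ q [MOD N]) {j : ℕ → ℕ} (hj : StrictMono j) (hj0 : j 0 = 0)
    (hjs : j s = N) :
    IsSubdividedCycle G (Set.range c) (fun i : Fin s => c (j i))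
      fun i => (List.Ico (j i + 1) (j (i + 1))).map c := by
  have hinj : ∀ p < N, ∀ q < N, c p = c q → p = q := fun p hp q hq hpq =>
    ((hc p q).1 hpq).eq_of_lt_of_lt hp hq
  have hjN : ∀ k : Fin s, j k < N := fun k => hjs ▸ hj k.2
  have hjN' : ∀ k : Fin s, j (k + 1) ≤ N := fun k => hjs ▸ hj.monotone k.2
  have hcs : c (j s) = c (j 0) := by
    rw [hj0, hjs, hc]
    exact Nat.modEq_zero_iff_dvd.2 dvd_rfl
  have hpath : ∀ i k : Fin s, dirCycle s i k →
      c (j i) :: ((List.Ico (j i + 1) (j (i + 1))).map c ++ [c (j k)]) =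
        (List.Ico (j i) (j (i + 1) + 1)).map c := fun i k hik => by
    rw [apply_eq_apply_succ_of_dirCycle (g := fun m => c (j m)) hcs hik,
      cons_map_Ico_append c (hj (Nat.lt_add_one i))]
  refine ⟨fun i k hik => ?_, fun i => ⟨_, rfl⟩, fun i u hu => ?_, fun i k hik => ?_,
    fun i k hik => ?_, fun i u hu => ?_, fun i k hik u hu hu' => ?_⟩
  · exact Fin.ext (hj.injective (hinj _ (hjN i) _ (hjN k) hik))
  · obtain ⟨p, -, rfl⟩ := List.mem_map.1 hu
    exact ⟨p, rfl⟩
  · exact hpath i k hik ▸ isChain_map_Ico hG _ _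
  · rw [hpath i k hik]
    exact nodup_map_Ico hc (hjs ▸ apply_succ_lt_add_of_strictMono hj hs i.2)
  · obtain ⟨p, hp, rfl⟩ := List.mem_map.1 hu
    rw [List.Ico.mem] at hp
    rintro ⟨k, hk⟩
    obtain rfl := hinj _ (hjN k) _ (hp.2.trans_le (hjN' i)) hk
    have hik := hj.lt_iff_lt.1 hp.1
    have hki := hj.lt_iff_lt.1 hp.2
    omega
  · obtain ⟨p, hp, rfl⟩ := List.mem_map.1 hu
    obtain ⟨q, hq, hpq⟩ := List.mem_map.1 hu'
    rw [List.Ico.mem] at hp hq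
    obtain rfl := hinj _ (hq.2.trans_le (hjN' k)) _ (hp.2.trans_le (hjN' i)) hpq
    exact (hj.monotone.pairwise_disjoint_on_Ioo_succ (Fin.val_injective.ne hik)).notMem_of_mem_left
      ⟨hp.1, hp.2⟩ ⟨hq.1, hq.2⟩

theorem exists_isSubdividedCycle {C : Cycle W} (hchain : C.Chain G) (hnodup : C.Nodup) {R : Set W}
    (hRC : ∀ u ∈ R, u ∈ C) (hR : 2 ≤ R.ncard) {x : W} (hx : x ∈ R) :
    ∃ (f : Fin R.ncard → W) (Q : Fin R.ncard → List W), IsSubdividedCycle G {u | u ∈ C} f Q ∧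
      (∀ i, f i ∈ R) ∧ ∀ i : Fin R.ncard, (i : ℕ) = 0 → f i = x := by
  obtain ⟨N, hN, c, rfl, hG, hc, hrange⟩ := exists_periodic_of_mem_cycle hchain hnodup (hRC x hx)
  obtain ⟨j, hj, hj0, hjs, hjR⟩ := exists_strictMono_forall_mem hN hc (hrange ▸ hRC) hx
  rw [← hrange]
  exact ⟨_, _, isSubdividedCycle_of_strictMono hR hG hc hj hj0 hjs, fun i => hjR i,
    fun i hi => by rw [hi, hj0]⟩

/-- The internal vertices of the paths replacing the arcs of a partial wheel, where rim arcs follow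
the subdivided cycle and spokes follow the fan. -/
def wheelPath (f : Fin s → W) (Q : Fin s → List W) (F : W → List W) :
    Option (Fin s) → Option (Fin s) → List W
  | some i, some _ => Q i
  | none, some k => F (f k)
  | _, none => []

theorem IsSubdividedCycle.disjoint_wheelPath {K B : Set W} {F : W → List W} {y : W}
    {f : Fin s → W} {Q : Fin s → List W} (hQ : IsSubdividedCycle G K f Q) (hF : IsFan G K y B F)
    {Z : Set (Fin s)} (hZ : ∀ k ∈ Z, f k ∈ B) {a b a' b' : Option (Fin s)}
    (h : partialWheel Z a b) (h' : partialWheel Z a' b') (hne : (a, b) ≠ (a', b')) :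
    (wheelPath f Q F a b).Disjoint (wheelPath f Q F a' b') := by
  intro u hu hu'
  rcases a with _ | i <;> rcases b with _ | k
  · exact h
  · rcases a' with _ | i' <;> rcases b' with _ | k'
    · exact h'
    · exact hF.disjoint (hZ k h) (hZ k' h')
        (hQ.injective.ne fun hk => hne (congrArg (none, some ·) hk)) hu hu'
    · exact List.not_mem_nil hu'
    · exact hF.notMem _ (hZ k h) _ hu (hQ.mem i' _ hu')
  · exact List.not_mem_nil hu
  · rcases a' with _ | i' <;> rcases b' with _ | k'
    · exact h'
    · exact hF.notMem _ (hZ k' h') _ hu' (hQ.mem i _ hu)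
    · exact List.not_mem_nil hu'
    · refine hQ.disjoint (fun hi => hne ?_) hu hu'
      subst hi
      rw [Fin.ext ((show (k : ℕ) = _ from h).trans (show (k' : ℕ) = _ from h').symm)]

theorem IsSubdividedCycle.diSubdivisionIn_partialWheel {K B : Set W} {F : W → List W} {y : W}
    {f : Fin s → W} {Q : Fin s → List W} (hQ : IsSubdividedCycle G K f Q) (hF : IsFan G K y B F)
    (hy : y ∉ K) (hfy : ∀ i : Fin s, (i : ℕ) = 0 → G (f i) y) {Z : Set (Fin s)}
    (hZ : ∀ k ∈ Z, f k ∈ B) : DiSubdivisionIn G (partialWheel Z) := by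
  have hyf : ∀ i, f i ≠ y := fun i hi => hy (hi ▸ hQ.branch_mem i)
  have hyF : ∀ b ∈ B, y ∉ F b := fun b hb hyb =>
    (List.nodup_cons.1 (hF.nodup b hb)).1 (List.mem_append_left _ hyb)
  refine ⟨fun a => a.elim y f, ?_, fun a b _ => wheelPath f Q F a b, ?_, ?_, ?_,
    fun a b a' b' h h' hne u hu hu' => hQ.disjoint_wheelPath hF hZ h h' hne hu hu'⟩
  · rintro (_ | i) (_ | k) hik
    · rfl
    · exact absurd hik.symm (hyf k)
    · exact absurd hik (hyf i)
    · exact congrArg some (hQ.injective hik)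
  · rintro (_ | i) (_ | k) h
    · exact h.elim
    · exact hF.isChain _ (hZ k h)
    · exact List.isChain_pair.2 (hfy i h)
    · exact hQ.isChain i k h
  · rintro (_ | i) (_ | k) h
    · exact h.elim
    · exact hF.nodup _ (hZ k h)
    · simpa [wheelPath] using hyf i
    · exact hQ.nodup i k h
  · rintro (_ | i) (_ | k) h u hu ⟨_ | l, rfl⟩
    · exact h
    · exact h
    · exact hyF _ (hZ k h) hu
    · exact hF.notMem _ (hZ k h) _ hu (hQ.branch_mem l)
    · exact List.not_mem_nil hu
    · exact List.not_mem_nil hu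
    · exact hy (hQ.mem i _ hu)
    · exact hQ.notMem_range i _ hu ⟨l, rfl⟩

theorem IsFan.diSubdivisionIn_dirW1_or_dirW2 [Finite W] {t : ℕ} (ht : 2 ≤ t) {C : Cycle W}
    (hchain : C.Chain G) (hnodup : C.Nodup) {x y : W} (hx : x ∈ C) (hy : y ∉ C) (hxy : G x y)
    {B : Set W} {F : W → List W} (hF : IsFan G {u | u ∈ C} y B F) (hB : B.ncard = t) :
    DiSubdivisionIn G (dirW1 t) ∨ DiSubdivisionIn G (dirW2 (t + 1)) := by
  have hwheel : ∀ R ⊆ {u | u ∈ C}, 2 ≤ R.ncard → x ∈ R → ∃ f : Fin R.ncard → W,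
      (∀ i, f i ∈ R) ∧ (∀ i, f i = x → (i : ℕ) = 0) ∧
        ∀ Z : Set (Fin R.ncard), (∀ k ∈ Z, f k ∈ B) → DiSubdivisionIn G (partialWheel Z) := by
    intro R hRC hR hxR
    obtain ⟨f, Q, hQ, hfR, hfx⟩ := exists_isSubdividedCycle hchain hnodup hRC hR hxR
    refine ⟨f, hfR, fun i hi => ?_, fun Z hZ =>
      hQ.diSubdivisionIn_partialWheel hF hy (fun i hi => (hfx i hi).symm ▸ hxy) hZ⟩
    exact congrArg Fin.val (hQ.injective (hi.trans (hfx ⟨0, by omega⟩ rfl).symm))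
  by_cases hxB : x ∈ B
  · left
    obtain ⟨f, hfB, -, hf⟩ := hwheel B hF.subset (hB ▸ ht) hxB
    rw [dirW1_eq_partialWheel, ← hB]
    exact hf _ fun k _ => hfB k
  · right
    have hR : (insert x B).ncard = t + 1 := hB ▸ Set.ncard_insert_of_notMem hxB
    obtain ⟨f, hfR, hfx, hf⟩ :=
      hwheel (insert x B) (Set.insert_subset hx hF.subset) (by omega) (Set.mem_insert x B)
    rw [dirW2_eq_partialWheel, ← hR]
    exact hf _ fun k hk => (hfR k).resolve_left fun hkx => hk (hfx k hkx)

end Wheels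

section Walks

variable {W : Type*} {G : W → W → Prop} {R X : Set W} {u v y : W}

theorem exists_append_of_duplicate {l : List W} (h : List.Duplicate u l) :
    ∃ l₁ l₂ l₃, l = l₁ ++ u :: (l₂ ++ u :: l₃) := by
  induction h with
  | cons_mem hu =>
    obtain ⟨l₂, l₃, rfl⟩ := List.append_of_mem hu
    exact ⟨[], l₂, l₃, rfl⟩
  | @cons_duplicate w _ _ ih =>
    obtain ⟨l₁, l₂, l₃, rfl⟩ := ih
    exact ⟨w :: l₁, l₂, l₃, rfl⟩

theorem exists_nodup_isChain_of_reflTransGen (h : Relation.ReflTransGen G y v) :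
    ∃ l, (y :: l).IsChain G ∧ (y :: l).getLast? = some v ∧ (y :: l).Nodup ∧
      ∀ u ∈ l, G y u → l.head? = some u := by
  obtain ⟨l₀, hchain₀, hlast₀⟩ := List.exists_isChain_cons_of_relationReflTransGen h
  obtain ⟨L, ⟨hchain, hhead, hlast⟩, hmin⟩ := exists_minimalFor_of_wellFoundedLT
    (fun L : List W => L.IsChain G ∧ L.head? = some y ∧ L.getLast? = some v) List.length
    ⟨y :: l₀, hchain₀, rfl, by rw [List.getLast?_eq_getLast_of_ne_nil (by simp), hlast₀]⟩
  obtain ⟨l, rfl⟩ := List.head?_eq_some_iff.1 hhead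
  refine ⟨l, hchain, hlast, ?_, ?_⟩
  · by_contra hdup
    obtain ⟨a, ha⟩ := List.exists_duplicate_iff_not_nodup.2 hdup
    obtain ⟨l₁, l₂, l₃, hl⟩ := exists_append_of_duplicate ha
    rw [hl] at hchain hhead hlast hmin
    obtain ⟨hchain₁, hchain₂⟩ := List.isChain_split.1 hchain
    have hshort := hmin ⟨List.isChain_split.2 ⟨hchain₁, (List.isChain_cons_split.1 hchain₂).2⟩,
      by simpa using hhead, by simpa [List.getLast?_cons] using hlast⟩ (by simp; omega)
    simp only [List.length_append, List.length_cons] at hshort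
    omega
  · intro u hu hyu
    obtain ⟨l₁, l₂, rfl⟩ := List.append_of_mem hu
    have hshort := hmin ⟨List.isChain_cons_cons.2 ⟨hyu, (List.isChain_cons_split.1 hchain).2⟩, rfl,
      by simpa [List.getLast?_cons] using hlast⟩ (by simp)
    obtain rfl : l₁ = [] := by simpa using hshort
    rfl

theorem nonempty_inBoundary_of_reflTransGen (h : Relation.ReflTransGen G u v) (hu : u ∉ R)
    (hv : v ∈ R) : (inBoundary G R).Nonempty := by
  induction h with
  | refl => exact absurd hv hu
  | @tail b c _ hbc ih =>
    by_cases hb : b ∈ R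
    · exact ih hb
    · exact ⟨c, hv, b, hb, hbc⟩

theorem HasCutBound.reflTransGen_of_mem_inBoundary [Finite W] (hy : y ∉ R)
    (hcut : HasCutBound G R {y}ᶜ (inBoundary G R).ncard) (hv : v ∈ inBoundary G R) :
    Relation.ReflTransGen (fun a b => G a b ∧ a ∉ R) y v := by
  set D := {u | u ∉ R ∧ Relation.ReflTransGen (fun a b => G a b ∧ a ∉ R) y u}
  have hstep : ∀ u ∈ D, ∀ w, G u w → Relation.ReflTransGen (fun a b => G a b ∧ a ∉ R) y w :=
    fun u hu w huw => hu.2.tail ⟨huw, hu.1⟩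
  have hsub : inBoundary G Dᶜ ⊆ inBoundary G R := by
    rintro w ⟨hw, u, hu, huw⟩
    have huD : u ∈ D := not_not.1 hu
    exact ⟨not_not.1 fun hwR => hw ⟨hwR, hstep u huD w huw⟩, u, huD.1, huw⟩
  have heq := Set.eq_of_subset_of_ncard_le hsub <| hcut Dᶜ (fun u hu huD => huD.1 hu)
    (Set.compl_subset_compl.2 (Set.singleton_subset_iff.2 ⟨hy, .refl⟩))
  obtain ⟨-, u, hu, huv⟩ := heq ▸ hv
  exact hstep u (not_not.1 hu) v huv

theorem HasCutBound.exists_path [Finite W] (hy : y ∉ R)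
    (hcut : HasCutBound G R {y}ᶜ (inBoundary G R).ncard) (hv : v ∈ inBoundary G R) :
    ∃ Q : List W, (y :: (Q ++ [v])).IsChain G ∧ (y :: Q).Nodup ∧ (∀ u ∈ Q, u ∉ R) ∧
      ∀ u ∈ Q ++ [v], G y u → (Q ++ [v]).head? = some u := by
  obtain ⟨l, hchain, hlast, hnodup, hhead⟩ :=
    exists_nodup_isChain_of_reflTransGen (hcut.reflTransGen_of_mem_inBoundary hy hv)
  obtain ⟨Q, rfl⟩ : ∃ Q, l = Q ++ [v] := by
    rcases List.eq_nil_or_concat l with rfl | ⟨Q, w, rfl⟩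
    · obtain rfl : y = v := by simpa using hlast
      exact absurd hv.1 hy
    · exact ⟨Q, by simpa [List.getLast?_cons] using hlast⟩
  refine ⟨Q, hchain.imp fun _ _ => And.left, ?_, fun u hu => ?_, fun u hu hyu =>
    hhead u hu ⟨hyu, hy⟩⟩
  · rw [← List.cons_append] at hnodup
    exact hnodup.of_append_left
  · obtain ⟨s, m, rfl⟩ := List.append_of_mem hu
    rw [List.append_assoc, List.cons_append] at hchain
    obtain ⟨w, hw⟩ := Option.isSome_iff_exists.1 (show (m ++ [v]).head?.isSome by simp)
    exact ((List.isChain_cons.1 (List.isChain_cons_split.1 hchain).2).1 w hw).2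

theorem exists_adj_notMem_of_ncard_lt_outDeg [Finite W] {Q : List W}
    (hR : (inBoundary G R).ncard < outDeg G y) (hy : y ∉ R) (hyy : ¬ G y y)
    (hv : v ∈ inBoundary G R) (hQ : ∀ u ∈ Q ++ [v], G y u → (Q ++ [v]).head? = some u) :
    ∃ z, G y z ∧ z ∉ R ∪ insert y {u | u ∈ Q} := by
  by_contra! hall
  obtain ⟨q, hq⟩ := Option.isSome_iff_exists.1 (show (Q ++ [v]).head?.isSome by simp)
  have hsub : {u | G y u} ⊆ insert q (inBoundary G R \ {v}) := by
    intro u hu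
    by_cases huQ : u ∈ Q ++ [v]
    · exact .inl (Option.some_injective _ ((hQ u huQ hu).symm.trans hq))
    · simp only [List.mem_append, List.mem_singleton, not_or] at huQ
      obtain huR | rfl | huQ' := hall u hu
      · exact .inr ⟨⟨huR, y, hy, hu⟩, huQ.2⟩
      · exact absurd hu hyy
      · exact absurd huQ' huQ.1
  have hle := (Set.ncard_le_ncard hsub).trans (Set.ncard_insert_le _ _)
  rw [Set.ncard_sdiff_singleton_add_one hv] at hle
  exact hR.not_ge hle

end Walks

section Rerouting

variable {W : Type*} {G : W → W → Prop} {A K R S X : Set W} {t : ℕ} {x y : W}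

theorem HasCutBound.exists_superset [Finite W] (hKS : K ⊆ S)
    (hcut : HasCutBound G K S (inBoundary G S).ncard) (hSX : S ⊆ X)
    (hX : ¬ HasCutBound G K X t) :
    ∃ R, S ⊆ R ∧ R ⊆ X ∧ (inBoundary G R).ncard < t ∧
      HasCutBound G K X (inBoundary G R).ncard := by
  obtain ⟨T, hT, hmin⟩ := Set.exists_min_image {T | K ⊆ T ∧ T ⊆ X}
    (fun T => (inBoundary G T).ncard) (Set.toFinite _) ⟨K, subset_rfl, hKS.trans hSX⟩
  have hle := hcut.ncard_inBoundary_union_le hKS hT.1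
  refine ⟨S ∪ T, Set.subset_union_left, Set.union_subset hSX hT.2, ?_, fun T' hKT' hT'X =>
    hle.trans (hmin T' ⟨hKT', hT'X⟩)⟩
  simp only [HasCutBound, not_forall, not_le] at hX
  obtain ⟨T', hKT', hT'X, hlt⟩ := hX
  exact hle.trans_lt ((hmin T' ⟨hKT', hT'X⟩).trans_lt hlt)

theorem exists_cycle_eq_cons_append {C : Cycle W} (hx : x ∈ C) {E : Set W} (hE : E.Nonempty)
    (hEC : ∀ u ∈ E, u ∈ C) : ∃ c M N, C = ↑(c :: (M ++ N)) ∧ (c :: M).getLast? = some x ∧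
      c ∈ E ∧ ∀ u ∈ N, u ∉ E := by
  classical
  obtain ⟨L, rfl⟩ : ∃ L : List W, C = ↑(L ++ [x]) := by
    obtain ⟨L, rfl⟩ := exists_eq_coe_cons_of_mem hx
    exact ⟨L, Cycle.coe_eq_coe.2 (List.isRotated_append (l := [x]))⟩
  obtain ⟨w, hw⟩ := hE
  obtain ⟨c, hc⟩ := Option.isSome_iff_exists.1 <| List.find?_isSome (p := (· ∈ E)).2
    ⟨w, Cycle.mem_coe_iff.1 (hEC w hw), decide_eq_true hw⟩
  obtain ⟨hcE, N, M, hL, hN⟩ := List.find?_eq_some_iff_append.1 hc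
  refine ⟨c, M, N, ?_, ?_, by simpa using hcE, by simpa using hN⟩
  · exact hL ▸ Cycle.coe_eq_coe.2 (List.isRotated_append (l := N) (l' := c :: M))
  · have hlast := congrArg List.getLast? hL
    simpa [List.getLast?_cons] using hlast.symm

theorem chain_coe_cons_append_append {Q I M : List W} {v c : W}
    (hQ : (y :: (Q ++ [v])).IsChain G) (hI : (I ++ [c]).IsChain G)
    (hv : (I ++ [c]).head? = some v) (hM : (c :: M).IsChain G)
    (hx : (c :: M).getLast? = some x) (hxy : G x y) :
    (↑(y :: (Q ++ (I ++ c :: M))) : Cycle W).Chain G := by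
  have hMy : (c :: (M ++ [y])).IsChain G :=
    (List.isChain_append (l₁ := c :: M)).2 ⟨hM, .singleton y, by simpa [hx] using hxy⟩
  have hIM : (I ++ c :: (M ++ [y])).IsChain G := List.isChain_split.2 ⟨hI, hMy⟩
  obtain ⟨hQ, -, hlink⟩ := (List.isChain_append (l₁ := y :: Q)).1 hQ
  have hhead : (I ++ c :: (M ++ [y])).head? = some v := by
    simpa [List.head?_append] using hv
  simpa using (List.isChain_append (l₁ := y :: Q)).2 ⟨hQ, hIM, by simpa [hhead] using hlink⟩

theorem nodup_cons_append_append {Q I M : List W} {c : W} (hQ : (y :: Q).Nodup)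
    (hQR : ∀ u ∈ y :: Q, u ∉ R) (hI : I.Nodup) (hIK : ∀ u ∈ I, u ∈ R \ K)
    (hM : (c :: M).Nodup) (hMK : ∀ u ∈ c :: M, u ∈ K) (hKR : K ⊆ R) :
    (y :: (Q ++ (I ++ c :: M))).Nodup := by
  have hIM : (I ++ c :: M).Nodup := List.nodup_append'.2
    ⟨hI, hM, fun u hu hu' => (hIK u hu).2 (hMK u hu')⟩
  refine (List.nodup_append' (l₁ := y :: Q)).2 ⟨hQ, hIM, fun u hu hu' => hQR u hu ?_⟩
  exact (List.mem_append.1 hu').elim (fun h => (hIK u h).1) fun h => hKR (hMK u h)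

theorem IsLinkage_s19.exists_reroute {C : Cycle W} {I : W → List W} {e : W → W}
    (h : IsLinkage_s19 G R A {u | u ∈ C} I e) (hA : A.Nonempty) (hchain : C.Chain G)
    (hnodup : C.Nodup) (hCR : {u | u ∈ C} ⊆ R) (hx : x ∈ C) (hy : y ∉ R) (hxy : G x y) :
    ∃ v ∈ A, ∀ Q : List W, (y :: (Q ++ [v])).IsChain G → (y :: Q).Nodup →
      (∀ u ∈ Q, u ∉ R) → ∃ C' : Cycle W, C'.Chain G ∧ C'.Nodup ∧
        {u | u ∈ C'} ⊆ R ∪ insert y {u | u ∈ Q} ∧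
        e '' A ∪ insert y {u | u ∈ Q} ⊆ {u | u ∈ C'} := by
  obtain ⟨c, M, N, rfl, hlast, ⟨v, hv, rfl⟩, hN⟩ := exists_cycle_eq_cons_append hx (hA.image e)
    (by rintro _ ⟨a, ha, rfl⟩; exact h.end_mem a ha)
  simp only [Cycle.mem_coe_iff] at h hCR
  have hsub : ∀ u ∈ e v :: M, u ∈ e v :: (M ++ N) := by simp +contextual
  have hchain' : (e v :: M).IsChain G := by
    rw [Cycle.chain_coe_cons, List.append_assoc] at hchain
    exact hchain.left_of_append (l₁ := e v :: M)
  have hnodup' : (e v :: M).Nodup :=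
    (Cycle.nodup_coe_iff.1 hnodup).of_append_left (l₁ := e v :: M)
  refine ⟨v, hv, fun Q hQ hQnodup hQR => ⟨↑(y :: (Q ++ (I v ++ e v :: M))),
    chain_coe_cons_append_append hQ (h.isChain v hv) (h.head? v hv) hchain' hlast hxy,
    nodup_cons_append_append hQnodup (List.forall_mem_cons.2 ⟨hy, hQR⟩)
      (h.nodup v hv).of_append_left (h.mem_diff v hv) hnodup' hsub hCR, fun u hu => ?_, ?_⟩⟩
  · rw [Set.mem_ofPred_eq, Cycle.mem_coe_iff, ← List.cons_append, List.mem_append,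
      List.mem_append] at hu
    obtain hu | hu | hu := hu
    · exact .inr (by simpa using hu)
    · exact .inl (h.mem_diff v hv u hu).1
    · exact .inl (hCR (hsub u hu))
  · rintro u (⟨a, ha, rfl⟩ | hu)
    · have hmem := h.end_mem a ha
      have haN : e a ∉ N := fun hN' => hN _ hN' ⟨a, ha, rfl⟩
      simp only [Set.mem_ofPred_eq, List.mem_cons, List.mem_append, haN, or_false] at hmem
      simp [hmem]
    · simp only [Set.mem_insert_iff, Set.mem_ofPred_eq] at hu
      simp only [Set.mem_ofPred_eq, Cycle.mem_coe_iff, List.mem_cons, List.mem_append]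
      tauto

/-- The situation of the theorem: a cycle `C` in `G[S]` and an arc `(x, y)` leaving `S` from `C`,
with the disjoint paths from `∂⁻(S)` to `C` recorded through the equivalent cut bound. -/
structure IsLinkedCycle (G : W → W → Prop) (S : Set W) (C : Cycle W) (x y : W) : Prop where
  chain : C.Chain G
  nodup : C.Nodup
  subset : {u | u ∈ C} ⊆ S
  mem : x ∈ C
  notMem : y ∉ S
  adj : G x y
  hasCutBound : HasCutBound G {u | u ∈ C} S (inBoundary G S).ncard

theorem IsLinkedCycle.exists_reroute [Finite W] {C : Cycle W} {s : W}
    (h : IsLinkedCycle G R C x y) (hdeg : (inBoundary G R).ncard < outDeg G y)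
    (hyy : ¬ G y y) (hs : s ∈ R) (hreach : Relation.ReflTransGen G y s)
    (hcut : HasCutBound G {u | u ∈ C} {y}ᶜ (inBoundary G R).ncard) :
    ∃ S' C' y', R ⊂ S' ∧ IsLinkedCycle G S' C' y y' := by
  obtain ⟨A, hAR, hAcard, I, e, hlink⟩ := h.hasCutBound.exists_isLinkage h.subset
  obtain rfl : A = inBoundary G R := Set.eq_of_subset_of_ncard_le hAR hAcard.ge
  have hne := nonempty_inBoundary_of_reflTransGen hreach h.notMem hs
  obtain ⟨v, hv, hreroute⟩ :=
    hlink.exists_reroute hne h.chain h.nodup h.subset h.mem h.notMem h.adj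
  obtain ⟨Q, hQchain, hQnodup, hQR, hQadj⟩ := (hcut.mono_left h.subset).exists_path h.notMem hv
  obtain ⟨C', hchain, hnodup, hsub, hsup⟩ := hreroute Q hQchain hQnodup hQR
  obtain ⟨y', hyy', hy'⟩ := exists_adj_notMem_of_ncard_lt_outDeg hdeg h.notMem hyy hv hQadj
  refine ⟨_, C', y', ⟨Set.subset_union_left, fun hsub => h.notMem (hsub (by simp))⟩,
    hchain, hnodup, hsub, hsup (by simp), hy', hyy', ?_⟩
  refine (hlink.hasCutBound.union ?_ _).mono_left hsup
  rintro _ ⟨a, ha, rfl⟩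
  exact h.subset (hlink.end_mem a ha)

theorem IsLinkedCycle.exists_ssuperset [Finite W] {C : Cycle W} {s : W}
    (h : IsLinkedCycle G S C x y) (hdeg : t ≤ outDeg G y) (hyy : ¬ G y y) (hs : s ∈ S)
    (hreach : Relation.ReflTransGen G y s) (hcut : ¬ HasCutBound G {u | u ∈ C} {y}ᶜ t) :
    ∃ S' C' y', S ⊂ S' ∧ IsLinkedCycle G S' C' y y' := by
  obtain ⟨R, hSR, hRy, hRt, hRcut⟩ :=
    h.hasCutBound.exists_superset h.subset (Set.subset_compl_singleton_iff.2 h.notMem) hcut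
  have hR : IsLinkedCycle G R C x y := ⟨h.chain, h.nodup, h.subset.trans hSR, h.mem,
    Set.subset_compl_singleton_iff.1 hRy, h.adj, fun T hT hTR => hRcut T hT (hTR.trans hRy)⟩
  obtain ⟨S', C', y', hRS', h'⟩ :=
    hR.exists_reroute (hRt.trans_le hdeg) hyy (hSR hs) hreach hRcut
  exact ⟨S', C', y', hSR.trans_ssubset hRS', h'⟩

theorem IsLinkedCycle.diSubdivisionIn_dirW1_or_dirW2 [Finite W] {C : Cycle W} (ht : 2 ≤ t)
    (h : IsLinkedCycle G S C x y) (hloop : ∀ w ∉ S, ¬ G w w) (hdeg : ∀ w ∉ S, t ≤ outDeg G w)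
    (hreach : ∀ w ∉ S, ∃ s ∈ S, Relation.ReflTransGen G w s) :
    DiSubdivisionIn G (dirW1 t) ∨ DiSubdivisionIn G (dirW2 (t + 1)) := by
  induction S using WellFoundedGT.induction generalizing C x y with | _ S ih
  have hyC : y ∉ {u | u ∈ C} := fun hy => h.notMem (h.subset hy)
  by_cases hcut : HasCutBound G {u | u ∈ C} {y}ᶜ t
  · obtain ⟨B, F, hB, hF⟩ := hcut.exists_isFan hyC
    exact hF.diSubdivisionIn_dirW1_or_dirW2 ht h.chain h.nodup h.mem hyC h.adj hB
  · obtain ⟨s, hs, hys⟩ := hreach y h.notMem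
    obtain ⟨S', C', y', hSS', h'⟩ :=
      h.exists_ssuperset (hdeg y h.notMem) (hloop y h.notMem) hs hys hcut
    have hout : ∀ w ∉ S', w ∉ S := fun w hw hwS => hw (hSS'.subset hwS)
    exact ih S' hSS' h' (fun w hw => hloop w (hout w hw)) (fun w hw => hdeg w (hout w hw))
      fun w hw => (hreach w (hout w hw)).imp fun _ => And.imp_left (hSS'.subset ·)

theorem chain_coe_of_isChain {l : List W} (hl : l.IsChain G)
    (hclosed : ∀ a b, l.head? = some a → l.getLast? = some b → G b a) :
    (l : Cycle W).Chain G := by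
  cases l with
  | nil => exact Cycle.Chain.nil G
  | cons a l =>
    rw [Cycle.chain_coe_cons, ← List.cons_append, List.isChain_append]
    exact ⟨hl, .singleton a, fun b hb w hw => by
      obtain rfl : a = w := by simpa using hw
      exact hclosed a b rfl hb⟩

end Rerouting

theorem wheel_directed_lemma_general {W : Type*} [Finite W] {t : ℕ} (ht : 2 ≤ t)
    {G : W → W → Prop} {S : Set W} (hloop : ∀ w ∉ S, ¬ G w w)
    (hreach : ∀ w ∉ S, ∃ s ∈ S, Relation.ReflTransGen G w s)
    (hdeg : ∀ w ∉ S, t ≤ outDeg G w)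
    {C : List W} (hCS : ∀ c ∈ C, c ∈ S) (hCnd : C.Nodup) (hCchain : C.IsChain G)
    (hCclosed : ∀ hd lst : W, C.head? = some hd → C.getLast? = some lst → G lst hd)
    {P : W → List W} (hPchain : ∀ v ∈ inBoundary G S, (v :: P v).IsChain G)
    (hPend : ∀ v ∈ inBoundary G S, ∀ lst : W, (v :: P v).getLast? = some lst → lst ∈ C)
    (hPdisj : ∀ v ∈ inBoundary G S, ∀ v' ∈ inBoundary G S, v ≠ v' →
      ∀ x ∈ (v :: P v), x ∉ (v' :: P v'))
    {x y : W} (hxC : x ∈ C) (hyS : y ∉ S) (hxy : G x y) :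
    DiSubdivisionIn G (dirW1 t) ∨ DiSubdivisionIn G (dirW2 (t + 1)) := by
  have hcut : HasCutBound G {u | u ∈ C} S (inBoundary G S).ncard :=
    hasCutBound_of_disjoint_isChain hPchain (fun v _ => rfl)
      (fun v hv => ⟨_, hPend v hv _ (List.getLast?_cons ..), List.getLast?_cons ..⟩)
      fun v hv w hw hvw u => hPdisj v hv w hw hvw u
  have hlinked : IsLinkedCycle G S C x y := ⟨chain_coe_of_isChain hCchain hCclosed,
    Cycle.nodup_coe_iff.2 hCnd, hCS, Cycle.mem_coe_iff.2 hxC, hyS, hxy, hcut⟩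
  exact hlinked.diSubdivisionIn_dirW1_or_dirW2 ht hloop hdeg hreach

/-- Technical lemma for directed wheels. Let `t ≥ 2`, let `G` be a strongly connected digraph
and `S ⊆ V(G)` such that: every vertex outside `S` has out-degree at least `t`; there is a
directed cycle `C` in `G[S]` and a family of `|∂⁻(S)|` pairwise disjoint directed paths
(`v :: P v` for `v ∈ ∂⁻(S)`) from `∂⁻(S)` to `V(C)` internally disjoint from `V(C)`; and
there is an arc `(x,y)` with `x ∈ V(C)` and `y ∉ S`. Then `G` contains a subdivision of
`W⃗_t¹` or a subdivision of `W⃗_{t+1}²`. -/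
theorem wheel_directed_lemma
    {W : Type*} [Fintype W] (t : ℕ) (ht : 2 ≤ t)
    (G : W → W → Prop) (hG : Irreflexive G)
    (hsc : ∀ u v : W, Relation.ReflTransGen G u v)
    (S : Set W)
    (hdeg : ∀ w ∉ S, t ≤ outDeg G w)
    (C : List W) (hCS : ∀ c ∈ C, c ∈ S) (hCnd : C.Nodup) (hClen : 2 ≤ C.length)
    (hCchain : C.Chain' G)
    (hCclosed : ∀ hd lst : W, C.head? = some hd → C.getLast? = some lst → G lst hd)
    (P : W → List W)
    (hPchain : ∀ v ∈ inBoundary G S, List.Chain G v (P v))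
    (hPend : ∀ v ∈ inBoundary G S, ∀ lst : W, (v :: P v).getLast? = some lst → lst ∈ C)
    (hPnd : ∀ v ∈ inBoundary G S, (v :: P v).Nodup)
    (hPint : ∀ v ∈ inBoundary G S, ∀ x ∈ (v :: P v).dropLast, x ≠ v → x ∉ C)
    (hPdisj : ∀ v ∈ inBoundary G S, ∀ v' ∈ inBoundary G S, v ≠ v' →
      ∀ x ∈ (v :: P v), x ∉ (v' :: P v'))
    (x y : W) (hxC : x ∈ C) (hyS : y ∉ S) (hxy : G x y) :
    DiSubdivisionIn G (dirW1 t) ∨ DiSubdivisionIn G (dirW2 (t + 1)) :=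
  wheel_directed_lemma_general ht (fun w _ => hG w) (fun w _ => ⟨x, hCS x hxC, hsc w x⟩)
    hdeg hCS hCnd hCchain hCclosed hPchain hPend hPdisj hxC hyS hxy
end
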